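/- Let g be a natural number and let a_i, b_i (i = 1, …, g) be integers with E := (∏_{i=1}^g a_i)·∏_{1 ≤ r < s ≤ g}(a_r b_s − a_s b_r) ≠ 0. For each prime p let ρ(p) be the number of residues n mod p with ∏_{i=1}^g (a_i n + b_i) ≡ 0 (mod p), and suppose ρ(p) < p for all primes p. Then there is a constant C depending only on g such that for all real numbers y, z with 1 < y ≤ z: #{n ∈ ℤ : z − y < n ≤ z, a_i n + b_i is prime for all i = 1, …, g} ≤ 2^g · g! · ∏_p (1 − (ρ(p) − 1)/(p − 1))·(1 − 1/p)^{−g+1} · (y/(log y)^g) · (1 + C·(log log 3y + log log 3|E|)/log y). -/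

import Mathlib

/-!
Selberg's `Λ²` sieve of level `D` bounds the count by `y / G(D)` plus a remainder of size `D ^ 2` up
to logarithms, and for the completely multiplicative `f` with `f(p) = ρ(p) / p` the denominator
`G(D)`, a sum over squarefree moduli, is at least `F(D) = ∑_{n ≤ D} f(n)`.

To bound `F(D)` from below, write `d_g(n) / n = (k * f)(n)`. The sum of the Dirichlet quotient `k`
is the singular series `𝔖`, and `k(p) = 0` unless `p ∣ E`. On the one hand,
`∑_{n ≤ D} d_g(n) / n · log (D / n) ≥ (log D) ^ (g + 1) / (g + 1)!`. On the other hand, up to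
`F(D) ∑ |k(b)| log b` the left-hand side is at most `𝔖 ∑_{n ≤ D} f(n) log (D / n)`, and the identity
`Λ * 1 = log` with Mertens' estimate for `∑ log p / p` gives
`(g + 1) ∑_{n ≤ D} f(n) log (D / n) ≤ F(D) (log D + O(L))`, where
`L = 1 + ∑_{p ∣ E} log p / p = O(1 + log log 3|E|)` also controls `∑ |k(b)| log b`. Hence
`F(D) ≥ (log D) ^ g / (g! 𝔖) · (1 - O(L / log D))`, and a `D` close to `√y` produces the factor
`2 ^ g`.
-/

open Real Finset

attribute [local instance] Classical.propDecidable

/-- The quantity `E = (∏ i, a i) · ∏_{r < s} (a_r b_s − a_s b_r)`. -/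
def sieveE {g : ℕ} (a b : Fin g → ℤ) : ℤ :=
  (∏ i, a i) *
    ∏ r : Fin g, ∏ s ∈ Finset.univ.filter (fun s => r < s), (a r * b s - a s * b r)

/-- `sieveRho a b p` is the number of residues `n` mod `p` with
`∏ i, (a i * n + b i) ≡ 0 (mod p)`. -/
noncomputable def sieveRho {g : ℕ} (a b : Fin g → ℤ) (p : ℕ) : ℕ :=
  Nat.card {n : ZMod p | ∏ i, ((a i : ZMod p) * n + (b i : ZMod p)) = 0}

section RootCount

open Polynomial

/-- The number of roots of an integer polynomial modulo `d`. -/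
noncomputable def residueRootCount (f : ℤ[X]) (d : ℕ) : ℕ :=
  Nat.card {x : ZMod d // aeval x f = 0}

lemma residueRootCount_one (f : ℤ[X]) : residueRootCount f 1 = 1 := by
  have : Unique {x : ZMod 1 // aeval x f = 0} :=
    ⟨⟨0, Subsingleton.elim _ _⟩, fun _ ↦ Subsingleton.elim _ _⟩
  exact Nat.card_unique

lemma residueRootCount_mul_of_coprime (f : ℤ[X]) {m n : ℕ} (h : m.Coprime n) :
    residueRootCount f (m * n) = residueRootCount f m * residueRootCount f n := by
  rw [residueRootCount, residueRootCount, residueRootCount, ← Nat.card_prod]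
  let e := ZMod.chineseRemainder h
  have root_iff (x : ZMod (m * n)) :
      aeval x f = 0 ↔ aeval (e x).1 f = 0 ∧ aeval (e x).2 f = 0 := by
    have aeval_e : e (aeval x f) = aeval (e x) f :=
      (aeval_algHom_apply e.toRingHom.toIntAlgHom x f).symm
    rw [← map_eq_zero_iff e e.injective, aeval_e, aeval_prod_apply, Prod.mk_eq_zero]
  exact Nat.card_congr ((e.toEquiv.subtypeEquiv root_iff).trans Equiv.subtypeProdEquivProd)

lemma residueRootCount_le_natDegree {f : ℤ[X]} {p : ℕ} (hp : p.Prime)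
    (h : residueRootCount f p < p) : residueRootCount f p ≤ f.natDegree := by
  have := Fact.mk hp
  let F := f.map (Int.castRingHom (ZMod p))
  have aeval_eq (x : ZMod p) : aeval x f = F.eval x := by
    simp [F, eval_map, aeval_def]
  have hF : F ≠ 0 := by
    intro hF
    simp [residueRootCount, aeval_eq, hF] at h
  calc residueRootCount f p = #F.roots.toFinset :=
        Nat.subtype_card _ fun x ↦ by simp [aeval_eq, hF]
    _ ≤ F.natDegree := F.roots.toFinset_card_le.trans F.card_roots'
    _ ≤ f.natDegree := natDegree_map_le

lemma abs_card_Ioc_filter_modEq_sub_le {x z : ℝ} (h : x ≤ z) {d : ℕ} (hd : 0 < d) (v : ℤ) :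
    |(#{n ∈ Ioc ⌊x⌋ ⌊z⌋ | n ≡ v [ZMOD d]} : ℝ) - (z - x) / d| ≤ 1 := by
  have floor_eq (t : ℝ) : ⌊((⌊t⌋ : ℚ) - v) / ((d : ℤ) : ℚ)⌋ = ⌊(t - v) / d⌋ := by
    rw [Int.cast_natCast, Int.floor_div_natCast, Int.floor_div_natCast, ← Int.cast_sub,
      Int.floor_intCast, Int.floor_sub_intCast]
  have card_eq : (#{n ∈ Ioc ⌊x⌋ ⌊z⌋ | n ≡ v [ZMOD d]} : ℤ) =
      ⌊(z - v) / d⌋ - ⌊(x - v) / d⌋ := by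
    convert Int.Ioc_filter_modEq_card ⌊x⌋ ⌊z⌋ (Int.natCast_pos.mpr hd) v
    rw [floor_eq, floor_eq, max_eq_left]
    exact sub_nonneg.mpr (by gcongr)
  have card_eq_real : (#{n ∈ Ioc ⌊x⌋ ⌊z⌋ | n ≡ v [ZMOD d]} : ℝ) =
      ⌊(z - v) / d⌋ - ⌊(x - v) / d⌋ := mod_cast card_eq
  rw [card_eq_real, show (z - x) / d = (z - v) / d - (x - v) / d by ring, abs_le]
  constructor <;>
    linarith [Int.floor_le ((z - v) / d), Int.lt_floor_add_one ((z - v) / d),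
      Int.floor_le ((x - v) / d), Int.lt_floor_add_one ((x - v) / d)]

lemma abs_card_Ioc_filter_dvd_eval_sub_le (f : ℤ[X]) {x z : ℝ} (h : x ≤ z) {d : ℕ} (hd : 0 < d) :
    |(#{n ∈ Ioc ⌊x⌋ ⌊z⌋ | (d : ℤ) ∣ f.eval n} : ℝ) - residueRootCount f d / d * (z - x)| ≤
      residueRootCount f d := by
  have : NeZero d := ⟨hd.ne'⟩
  let R : Finset (ZMod d) := {x | aeval x f = 0}
  have dvd_iff (n : ℤ) : (d : ℤ) ∣ f.eval n ↔ (n : ZMod d) ∈ R := by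
    rw [mem_filter_univ, aeval_def, algebraMap_int_eq, eval₂_at_intCast, eq_intCast, Int.cast_id,
      ZMod.intCast_zmod_eq_zero_iff_dvd]
  have card_R : residueRootCount f d = #R := Nat.subtype_card _ fun x ↦ by simp [R]
  have card_eq : #{n ∈ Ioc ⌊x⌋ ⌊z⌋ | (d : ℤ) ∣ f.eval n} =
      ∑ r ∈ R, #{n ∈ Ioc ⌊x⌋ ⌊z⌋ | n ≡ r.val [ZMOD d]} := by
    simp_rw [dvd_iff, ← ZMod.intCast_eq_intCast_iff, Int.cast_natCast, ZMod.natCast_zmod_val]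
    rw [card_eq_sum_card_fiberwise (f := ((↑) : ℤ → ZMod d)) (t := R) (by simp [Set.MapsTo])]
    refine sum_congr rfl fun r hr ↦ ?_
    rw [filter_filter]
    congr! 3
    aesop
  calc |(#{n ∈ Ioc ⌊x⌋ ⌊z⌋ | (d : ℤ) ∣ f.eval n} : ℝ) - residueRootCount f d / d * (z - x)|
      = |∑ r ∈ R, ((#{n ∈ Ioc ⌊x⌋ ⌊z⌋ | n ≡ r.val [ZMOD d]} : ℝ) - (z - x) / d)| := by
        rw [card_eq, card_R, sum_sub_distrib, sum_const, nsmul_eq_mul]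
        push_cast
        ring_nf
    _ ≤ ∑ r ∈ R, 1 := (abs_sum_le_sum_abs _ _).trans
        (sum_le_sum fun r _ ↦ abs_card_Ioc_filter_modEq_sub_le h hd _)
    _ = residueRootCount f d := by simp [card_R]

/-- The polynomial `∏ i, (a i * X + b i)` whose values are sifted. -/
noncomputable def linearProduct {ι : Type*} [Fintype ι] (a b : ι → ℤ) : ℤ[X] :=
  ∏ i, (C (a i) * X + C (b i))

section LinearProduct

variable {ι : Type*} [Fintype ι] (a b : ι → ℤ)

lemma aeval_linearProduct {R : Type*} [CommRing R] (x : R) :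
    aeval x (linearProduct a b) = ∏ i, ((a i : R) * x + b i) := by
  simp [linearProduct, map_prod]

lemma eval_linearProduct (n : ℤ) : (linearProduct a b).eval n = ∏ i, (a i * n + b i) := by
  simp [linearProduct, eval_prod]

lemma natDegree_linearProduct_le : (linearProduct a b).natDegree ≤ Fintype.card ι := by
  refine (natDegree_prod_le _ _).trans ?_
  simpa using sum_le_card_nsmul univ _ 1 fun i _ ↦ natDegree_linear_le (a := a i) (b := b i)

lemma card_le_residueRootCount_linearProduct {p : ℕ} (hp : p.Prime)
    (ha : ∀ i, ¬ (p : ℤ) ∣ a i) (hab : ∀ i j, i ≠ j → ¬ (p : ℤ) ∣ a i * b j - a j * b i) :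
    Fintype.card ι ≤ residueRootCount (linearProduct a b) p := by
  have := Fact.mk hp
  simp_rw [← ZMod.intCast_zmod_eq_zero_iff_dvd, Int.cast_sub, Int.cast_mul] at ha hab
  let root (i : ι) : {x : ZMod p // aeval x (linearProduct a b) = 0} :=
    ⟨-b i / a i, by
      rw [aeval_linearProduct]
      exact prod_eq_zero (mem_univ i) (by rw [mul_div_cancel₀ _ (ha i), neg_add_cancel])⟩
  have root_injective : Function.Injective root := by
    intro i j hij
    by_contra hne
    have := (div_eq_div_iff (ha i) (ha j)).mp (congrArg Subtype.val hij)
    exact hab i j hne (by linear_combination this)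
  simpa [residueRootCount] using Nat.card_le_card_of_injective root root_injective

end LinearProduct

section SieveRho

variable {g : ℕ} (a b : Fin g → ℤ)

lemma sieveRho_eq_residueRootCount :
    sieveRho a b = residueRootCount (linearProduct a b) := by
  ext d
  exact Nat.card_congr (Equiv.subtypeEquivRight fun x ↦ by simp [aeval_linearProduct])

variable {a b}

lemma sieveRho_le {p : ℕ} (hp : p.Prime) (h : sieveRho a b p < p) : sieveRho a b p ≤ g := by
  rw [sieveRho_eq_residueRootCount] at h ⊢
  simpa using (residueRootCount_le_natDegree hp h).trans (natDegree_linearProduct_le a b)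

lemma sieveRho_eq_of_not_dvd_sieveE {p : ℕ} (hp : p.Prime) (h : sieveRho a b p < p)
    (hE : ¬ (p : ℤ) ∣ sieveE a b) : sieveRho a b p = g := by
  refine (sieveRho_le hp h).antisymm ?_
  have not_dvd_det {i j : Fin g} (hij : i < j) : ¬ (p : ℤ) ∣ a i * b j - a j * b i := fun hdvd ↦
    hE <| (hdvd.trans (dvd_prod_of_mem (fun s ↦ a i * b s - a s * b i)
      (mem_filter.mpr ⟨mem_univ j, hij⟩))).trans <|
      (dvd_prod_of_mem (fun r ↦ ∏ s with r < s, (a r * b s - a s * b r)) (mem_univ i)).trans <|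
        dvd_mul_left _ _
  rw [sieveRho_eq_residueRootCount]
  simpa using card_le_residueRootCount_linearProduct a b hp
    (fun i hdvd ↦ hE ((hdvd.trans (dvd_prod_of_mem a (mem_univ i))).trans (dvd_mul_right _ _)))
    (fun i j hij ↦ (lt_or_gt_of_ne hij).elim not_dvd_det fun hji hdvd ↦
      not_dvd_det hji (by rw [← dvd_neg]; simpa using hdvd))

end SieveRho

end RootCount

section SelbergSieve

open BoundingSieve ArithmeticFunction
open scoped ArithmeticFunction.Moebius

lemma sum_moebius_divisors_filter_dvd {m : ℕ} (hm : Squarefree m) (l : ℕ) :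
    ∑ d ∈ m.divisors with l ∣ d, μ d = if l = m then μ m else 0 := by
  have hm0 : m ≠ 0 := hm.ne_zero
  by_cases hlm : l ∣ m
  · obtain ⟨c, rfl⟩ := hlm
    have hl0 : l ≠ 0 := left_ne_zero_of_mul hm0
    have hc0 : c ≠ 0 := right_ne_zero_of_mul hm0
    have filter_eq : {d ∈ (l * c).divisors | l ∣ d} = c.divisors.image (l * ·) := by
      ext d
      simp only [mem_filter, Nat.mem_divisors, mem_image]
      constructor
      · rintro ⟨⟨hd, -⟩, e, rfl⟩
        exact ⟨e, ⟨Nat.dvd_of_mul_dvd_mul_left (Nat.pos_of_ne_zero hl0) hd, hc0⟩, rfl⟩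
      · rintro ⟨e, ⟨he, -⟩, rfl⟩
        exact ⟨⟨Nat.mul_dvd_mul_left l he, hm0⟩, dvd_mul_right l e⟩
    have moebius_mul {e : ℕ} (he : e ∈ c.divisors) : μ (l * e) = μ l * μ e :=
      isMultiplicative_moebius.map_mul_of_coprime <|
        (Nat.coprime_of_squarefree_mul hm).coprime_dvd_right (Nat.dvd_of_mem_divisors he)
    rw [filter_eq, sum_image fun x _ y _ h ↦ Nat.eq_of_mul_eq_mul_left (Nat.pos_of_ne_zero hl0) h,
      sum_congr rfl fun e he ↦ moebius_mul he, ← mul_sum, ← coe_mul_zeta_apply,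
      moebius_mul_coe_zeta, one_apply]
    by_cases hc : c = 1
    · simp [hc]
    · simp [hc, hl0]
  · rw [if_neg (by rintro rfl; exact hlm dvd_rfl), sum_eq_zero]
    exact fun d hd ↦ absurd ((mem_filter.mp hd).2.trans
      (Nat.dvd_of_mem_divisors (mem_filter.mp hd).1)) hlm

variable (s : BoundingSieve) (D : ℕ)

/-- The sum `G(D) = ∑_{l ∣ P, l ≤ D} g(l)` in the denominator of Selberg's upper bound. -/
noncomputable def selbergSum : ℝ :=
  ∑ l ∈ s.prodPrimes.divisors with l ≤ D, s.selbergTerms l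

/-- The optimal weights of Selberg's `Λ²` sieve of level `D`, here given by the formula
`w d = μ(d) ν(d)⁻¹ G(D)⁻¹ ∑_{d ∣ m ∣ P, m ≤ D} g(m)`. -/
noncomputable def selbergWeights (d : ℕ) : ℝ :=
  μ d * ((s.nu d)⁻¹ * ∑ m ∈ s.prodPrimes.divisors with d ∣ m ∧ m ≤ D, s.selbergTerms m) /
    selbergSum s D

variable {s D}

lemma selbergSum_pos (hD : 1 ≤ D) : 0 < selbergSum s D :=
  sum_pos (fun _ hl ↦ selbergTerms_pos (Nat.dvd_of_mem_divisors (mem_filter.mp hl).1))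
    ⟨1, by simp [hD, prodPrimes_ne_zero]⟩

lemma selbergWeights_one (hD : 1 ≤ D) : selbergWeights s D 1 = 1 := by
  have := (selbergSum_pos (s := s) hD).ne'
  rw [selbergWeights, s.nu_mult.map_one]
  simpa [selbergSum] using div_self this

lemma selbergWeights_eq_zero {d : ℕ} (hd : D < d) : selbergWeights s D d = 0 := by
  have filter_eq : {m ∈ s.prodPrimes.divisors | d ∣ m ∧ m ≤ D} = ∅ := by
    refine filter_eq_empty_iff.mpr fun m hm h ↦ ?_
    exact hd.not_ge ((Nat.le_of_dvd (Nat.pos_of_mem_divisors hm) h.1).trans h.2)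
  simp [selbergWeights, filter_eq]

lemma sum_nu_mul_selbergWeights {l : ℕ} (hl : l ∣ s.prodPrimes) :
    ∑ d ∈ s.prodPrimes.divisors with l ∣ d, s.nu d * selbergWeights s D d =
      if l ≤ D then μ l * s.selbergTerms l / selbergSum s D else 0 := by
  have nu_mul {d : ℕ} (hd : d ∈ s.prodPrimes.divisors) : s.nu d * selbergWeights s D d =
      ∑ m ∈ s.prodPrimes.divisors with m ≤ D,
        if d ∣ m then μ d * (s.selbergTerms m / selbergSum s D) else 0 := by
    have := nu_ne_zero (Nat.dvd_of_mem_divisors hd)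
    rw [selbergWeights, ← sum_filter, filter_filter, ← mul_sum, ← sum_div]
    simp_rw [and_comm]
    field_simp
  have moebius_sum {m : ℕ} (hm : m ∣ s.prodPrimes) :
      ∑ d ∈ s.prodPrimes.divisors with l ∣ d, (if d ∣ m then (μ d : ℝ) else 0) =
        if l = m then (μ m : ℝ) else 0 := by
    have := sum_moebius_divisors_filter_dvd (squarefree_of_dvd_prodPrimes hm) l
    rw [← Nat.divisors_filter_dvd_of_dvd prodPrimes_ne_zero hm, filter_filter] at this
    rw [← sum_filter, filter_filter]
    simp_rw [and_comm (b := _ ∣ m)]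
    exact_mod_cast this
  calc ∑ d ∈ s.prodPrimes.divisors with l ∣ d, s.nu d * selbergWeights s D d
      = ∑ m ∈ s.prodPrimes.divisors with m ≤ D,
          (∑ d ∈ s.prodPrimes.divisors with l ∣ d, if d ∣ m then (μ d : ℝ) else 0) *
            (s.selbergTerms m / selbergSum s D) := by
        rw [sum_congr rfl fun d hd ↦ nu_mul (mem_filter.mp hd).1, sum_comm]
        simp_rw [sum_mul, ite_mul, zero_mul]
    _ = ∑ m ∈ s.prodPrimes.divisors with m ≤ D,
          if l = m then μ m * (s.selbergTerms m / selbergSum s D) else 0 := by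
        refine sum_congr rfl fun m hm ↦ ?_
        rw [moebius_sum (Nat.dvd_of_mem_divisors (mem_filter.mp hm).1), ite_mul, zero_mul]
    _ = if l ≤ D then μ l * s.selbergTerms l / selbergSum s D else 0 := by
        rw [sum_ite_eq]
        simp [hl, prodPrimes_ne_zero, mul_div_assoc]

lemma mainSum_selbergWeights (hD : 1 ≤ D) :
    s.mainSum (lambdaSquared (selbergWeights s D)) = (selbergSum s D)⁻¹ := by
  have hG := (selbergSum_pos (s := s) hD).ne'
  have diagonal_term {l : ℕ} (hl : l ∣ s.prodPrimes) : (s.selbergTerms l)⁻¹ *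
      (∑ d ∈ s.prodPrimes.divisors with l ∣ d, s.nu d * selbergWeights s D d) ^ 2 =
        if l ≤ D then s.selbergTerms l / selbergSum s D ^ 2 else 0 := by
    have moebius_sq : (μ l : ℝ) ^ 2 = 1 := mod_cast
      moebius_sq_eq_one_of_squarefree (squarefree_of_dvd_prodPrimes hl)
    have := (selbergTerms_pos hl).ne'
    rw [sum_nu_mul_selbergWeights hl]
    split_ifs
    · rw [div_pow, mul_pow, moebius_sq]
      field_simp
    · simp
  rw [mainSum_lambdaSquared_eq_sum_mul_sum_sq]
  simp_rw [← sum_filter]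
  calc _ = ∑ l ∈ s.prodPrimes.divisors,
        if l ≤ D then s.selbergTerms l / selbergSum s D ^ 2 else 0 := by
        refine sum_congr rfl fun l hl ↦ ?_
        convert diagonal_term (Nat.dvd_of_mem_divisors hl)
    _ = selbergSum s D / selbergSum s D ^ 2 := by
        rw [← sum_filter, ← sum_div, selbergSum]
    _ = (selbergSum s D)⁻¹ := by field_simp

lemma sum_selbergTerms_filter_dvd {d : ℕ} (hd : d ∣ s.prodPrimes) :
    ∑ m ∈ s.prodPrimes.divisors with d ∣ m ∧ m ≤ D, s.selbergTerms m =
      s.selbergTerms d * ∑ c ∈ s.prodPrimes.divisors with d * c ∣ s.prodPrimes ∧ d * c ≤ D,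
        s.selbergTerms c := by
  have hd0 : 0 < d := Nat.pos_of_dvd_of_pos hd (Nat.pos_of_ne_zero prodPrimes_ne_zero)
  have filter_eq : {m ∈ s.prodPrimes.divisors | d ∣ m ∧ m ≤ D} =
      {c ∈ s.prodPrimes.divisors | d * c ∣ s.prodPrimes ∧ d * c ≤ D}.image (d * ·) := by
    ext m
    simp only [mem_filter, Nat.mem_divisors, mem_image]
    constructor
    · rintro ⟨⟨hm, hP⟩, ⟨c, rfl⟩, hle⟩
      exact ⟨c, ⟨⟨(dvd_mul_left c d).trans hm, hP⟩, hm, hle⟩, rfl⟩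
    · rintro ⟨c, ⟨⟨-, hP⟩, hm, hle⟩, rfl⟩
      exact ⟨⟨hm, hP⟩, dvd_mul_right d c, hle⟩
  rw [filter_eq, sum_image fun x _ y _ h ↦ Nat.eq_of_mul_eq_mul_left hd0 h, mul_sum]
  exact sum_congr rfl fun c hc ↦ selbergTerms_isMultiplicative.map_mul_of_coprime <|
    Nat.coprime_of_squarefree_mul (squarefree_of_dvd_prodPrimes (mem_filter.mp hc).2.1)

lemma inv_nu_mul_sum_selbergTerms_le_selbergSum {d : ℕ} (hd : d ∣ s.prodPrimes) :
    (s.nu d)⁻¹ * ∑ m ∈ s.prodPrimes.divisors with d ∣ m ∧ m ≤ D, s.selbergTerms m ≤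
      selbergSum s D := by
  have hd0 : 0 < d := Nat.pos_of_dvd_of_pos hd (Nat.pos_of_ne_zero prodPrimes_ne_zero)
  let S : Finset ℕ := {c ∈ s.prodPrimes.divisors | d * c ∣ s.prodPrimes ∧ d * c ≤ D}
  have hS {c : ℕ} (hc : c ∈ S) : d * c ∣ s.prodPrimes ∧ d * c ≤ D := (mem_filter.mp hc).2
  have coprime {c : ℕ} (hc : c ∈ S) : d.Coprime c :=
    Nat.coprime_of_squarefree_mul (squarefree_of_dvd_prodPrimes (hS hc).1)
  have sum_divisors : s.selbergTerms d * (s.nu d)⁻¹ = ∑ k ∈ d.divisors, s.selbergTerms k := by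
    rw [← sum_divisors_selbergTerms_eq_selbergTerms_mul_nu_inv hd, ← sum_filter,
      Nat.divisors_filter_dvd_of_dvd prodPrimes_ne_zero hd]
  have injOn : Set.InjOn (fun x : ℕ × ℕ ↦ x.1 * x.2) (d.divisors ×ˢ S : Finset (ℕ × ℕ)) := by
    have gcd_eq {k c : ℕ} (hk : k ∣ d) (hc : c ∈ S) : (k * c).gcd d = k := by
      rw [(coprime hc).symm.gcd_mul_right_cancel k, Nat.gcd_eq_left hk]
    rintro ⟨k, c⟩ hx ⟨k', c'⟩ hx' (h : k * c = k' * c')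
    simp only [coe_product, Set.mem_prod, mem_coe, Nat.mem_divisors] at hx hx'
    obtain rfl : k = k' := by rw [← gcd_eq hx.1.1 hx.2, h, gcd_eq hx'.1.1 hx'.2]
    rw [Nat.eq_of_mul_eq_mul_left (Nat.pos_of_dvd_of_pos hx.1.1 hd0) h]
  calc (s.nu d)⁻¹ * ∑ m ∈ s.prodPrimes.divisors with d ∣ m ∧ m ≤ D, s.selbergTerms m
      = ∑ x ∈ d.divisors ×ˢ S, s.selbergTerms (x.1 * x.2) := by
        rw [sum_selbergTerms_filter_dvd hd, ← mul_assoc, mul_comm (s.nu d)⁻¹, sum_divisors,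
          sum_mul_sum, ← sum_product']
        refine sum_congr rfl fun x hx ↦ ?_
        obtain ⟨hk, hc⟩ := mem_product.mp hx
        exact (selbergTerms_isMultiplicative.map_mul_of_coprime
          ((coprime hc).coprime_dvd_left (Nat.dvd_of_mem_divisors hk))).symm
    _ = ∑ l ∈ (d.divisors ×ˢ S).image fun x ↦ x.1 * x.2, s.selbergTerms l := (sum_image injOn).symm
    _ ≤ selbergSum s D := by
        refine sum_le_sum_of_subset_of_nonneg (image_subset_iff.mpr fun x hx ↦ ?_) fun l hl _ ↦
          (selbergTerms_pos (Nat.dvd_of_mem_divisors (mem_filter.mp hl).1)).le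
        obtain ⟨hk, hc⟩ := mem_product.mp hx
        have hdvd := Nat.mul_dvd_mul_right (Nat.dvd_of_mem_divisors hk) x.2
        simp only [mem_filter, Nat.mem_divisors]
        exact ⟨⟨hdvd.trans (hS hc).1, prodPrimes_ne_zero⟩,
          (Nat.mul_le_mul_right x.2 (Nat.divisor_le hk)).trans (hS hc).2⟩

lemma abs_selbergWeights_le_one (hD : 1 ≤ D) {d : ℕ} (hd : d ∣ s.prodPrimes) :
    |selbergWeights s D d| ≤ 1 := by
  have hG := selbergSum_pos (s := s) hD
  have moebius_le : |(μ d : ℝ)| ≤ 1 := mod_cast abs_moebius_le_one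
  have sum_nonneg : 0 ≤ (s.nu d)⁻¹ *
      ∑ m ∈ s.prodPrimes.divisors with d ∣ m ∧ m ≤ D, s.selbergTerms m :=
    mul_nonneg (inv_nonneg.mpr (nu_pos_of_dvd_prodPrimes hd).le) <| Finset.sum_nonneg fun m hm ↦
      (selbergTerms_pos (Nat.dvd_of_mem_divisors (mem_filter.mp hm).1)).le
  rw [selbergWeights, abs_div, abs_of_pos hG, div_le_one hG, abs_mul, abs_of_nonneg sum_nonneg]
  exact (mul_le_of_le_one_left sum_nonneg moebius_le).trans
    (inv_nu_mul_sum_selbergTerms_le_selbergSum hd)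

lemma errSum_lambdaSquared_le (w : ℕ → ℝ) :
    s.errSum (lambdaSquared w) ≤
      ∑ d ∈ s.prodPrimes.divisors, ∑ e ∈ s.prodPrimes.divisors,
        |w d| * |w e| * |s.rem (d.lcm e)| := by
  have abs_lambdaSquared_le {l : ℕ} (hl : l ∈ s.prodPrimes.divisors) : |lambdaSquared w l| ≤
      ∑ d ∈ s.prodPrimes.divisors, ∑ e ∈ s.prodPrimes.divisors,
        if l = d.lcm e then |w d| * |w e| else 0 := by
    have hsub := Nat.divisors_subset_of_dvd prodPrimes_ne_zero (Nat.dvd_of_mem_divisors hl)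
    have nonneg (d e : ℕ) : 0 ≤ if l = d.lcm e then |w d| * |w e| else 0 := by positivity
    calc |lambdaSquared w l|
        ≤ ∑ d ∈ l.divisors, ∑ e ∈ l.divisors, if l = d.lcm e then |w d| * |w e| else 0 := by
          refine (abs_sum_le_sum_abs _ _).trans (sum_le_sum fun d _ ↦ ?_)
          refine (abs_sum_le_sum_abs _ _).trans (sum_le_sum fun e _ ↦ ?_)
          split_ifs <;> simp [abs_mul]
      _ ≤ ∑ d ∈ s.prodPrimes.divisors, ∑ e ∈ l.divisors,
            if l = d.lcm e then |w d| * |w e| else 0 :=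
          sum_le_sum_of_subset_of_nonneg hsub fun d _ _ ↦ sum_nonneg fun e _ ↦ nonneg d e
      _ ≤ _ := sum_le_sum fun d _ ↦ sum_le_sum_of_subset_of_nonneg hsub fun e _ _ ↦ nonneg d e
  calc s.errSum (lambdaSquared w)
      ≤ ∑ l ∈ s.prodPrimes.divisors, ∑ d ∈ s.prodPrimes.divisors, ∑ e ∈ s.prodPrimes.divisors,
          if l = d.lcm e then |w d| * |w e| * |s.rem l| else 0 := by
        refine sum_le_sum fun l hl ↦ ?_
        refine (mul_le_mul_of_nonneg_right (abs_lambdaSquared_le hl) (abs_nonneg _)).trans_eq ?_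
        simp_rw [sum_mul, ite_mul, zero_mul]
    _ = _ := by
        rw [sum_comm]
        refine sum_congr rfl fun d hd ↦ ?_
        rw [sum_comm]
        refine sum_congr rfl fun e he ↦ ?_
        have : d.lcm e ∈ s.prodPrimes.divisors := Nat.mem_divisors.mpr
          ⟨Nat.lcm_dvd (Nat.dvd_of_mem_divisors hd) (Nat.dvd_of_mem_divisors he),
            prodPrimes_ne_zero⟩
        rw [sum_ite_eq', if_pos this]

theorem siftedSum_le_div_selbergSum_add_sq (hD : 1 ≤ D) {r : ℕ → ℝ}
    (hrem : ∀ d, d ∣ s.prodPrimes → |s.rem d| ≤ r d)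
    (hlcm : ∀ d e, d ∣ s.prodPrimes → e ∣ s.prodPrimes → r (d.lcm e) ≤ r d * r e) :
    s.siftedSum ≤ s.totalMass / selbergSum s D +
      (∑ d ∈ s.prodPrimes.divisors with d ≤ D, r d) ^ 2 := by
  have weight_le {d : ℕ} (hd : d ∈ s.prodPrimes.divisors) :
      |selbergWeights s D d| ≤ if d ≤ D then 1 else 0 := by
    split_ifs with h
    · exact abs_selbergWeights_le_one hD (Nat.dvd_of_mem_divisors hd)
    · rw [selbergWeights_eq_zero (not_le.mp h), abs_zero]
  have term_le {d e : ℕ} (hd : d ∈ s.prodPrimes.divisors) (he : e ∈ s.prodPrimes.divisors) :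
      |selbergWeights s D d| * |selbergWeights s D e| * |s.rem (d.lcm e)| ≤
        (if d ≤ D then r d else 0) * (if e ≤ D then r e else 0) := by
    have hd' := Nat.dvd_of_mem_divisors hd
    have he' := Nat.dvd_of_mem_divisors he
    calc _ ≤ (if d ≤ D then 1 else 0) * (if e ≤ D then 1 else 0) * (r d * r e) := by
          gcongr
          · exact weight_le hd
          · exact weight_le he
          · exact (hrem _ (Nat.lcm_dvd hd' he')).trans (hlcm d e hd' he')
      _ = _ := by split_ifs <;> simp
  have main := s.siftedSum_le_mainSum_errSum_of_upperMoebius _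
    (upperMoebius_lambdaSquared (selbergWeights s D) (selbergWeights_one hD))
  rw [mainSum_selbergWeights hD, ← div_eq_mul_inv] at main
  refine main.trans (add_le_add_right ((errSum_lambdaSquared_le _).trans ?_) _)
  rw [sum_filter, sq, sum_mul_sum]
  exact sum_le_sum fun d hd ↦ sum_le_sum fun e he ↦ term_le hd he

end SelbergSieve

section GeneralizedConvolution

open ArithmeticFunction

/-- The generalized convolution `∑_{n ≤ x} f(n) F(x / n)` of an arithmetic function `f` with a
function `F` on the reals; summatory functions and their logarithmic means are the cases `F = 1`
and `F = log`. -/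
noncomputable def generalizedConv (f : ArithmeticFunction ℝ) (F : ℝ → ℝ) (x : ℝ) : ℝ :=
  ∑ n ∈ Ioc 0 ⌊x⌋₊, f n * F (x / n)

lemma generalizedConv_mul (u v : ArithmeticFunction ℝ) (F : ℝ → ℝ) (x : ℝ) :
    generalizedConv (u * v) F x = generalizedConv u (generalizedConv v F) x := by
  set N := ⌊x⌋₊
  have sum_le_div {a : ℕ} (ha : a ∈ Ioc 0 N) (φ : ℕ → ℝ) :
      ∑ b ∈ Ioc 0 (N / a), φ b = ∑ b ∈ Ioc 0 N with a * b ≤ N, φ b := by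
    refine sum_congr ?_ fun _ _ ↦ rfl
    ext b
    have ha0 := (mem_Ioc.mp ha).1
    simp only [mem_filter, mem_Ioc, Nat.le_div_iff_mul_le ha0, mul_comm b]
    have : b ≤ a * b := Nat.le_mul_of_pos_left b ha0
    lia
  calc generalizedConv (u * v) F x
      = ∑ n ∈ Ioc 0 N, ∑ y ∈ Ioc 0 N ×ˢ Ioc 0 N,
          if y.1 * y.2 = n then u y.1 * v y.2 * F (x / n) else 0 := by
        refine sum_congr rfl fun n hn ↦ ?_
        rw [mul_apply, sum_mul, Nat.divisorsAntidiagonal_eq_prod_filter_of_le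
          (mem_Ioc.mp hn).1.ne' (mem_Ioc.mp hn).2, ← sum_filter]
    _ = ∑ y ∈ Ioc 0 N ×ˢ Ioc 0 N,
          if y.1 * y.2 ≤ N then u y.1 * v y.2 * F (x / (y.1 * y.2 : ℕ)) else 0 := by
        rw [sum_comm]
        refine sum_congr rfl fun y hy ↦ ?_
        simp only [mem_product, mem_Ioc] at hy
        simp [Nat.mul_pos hy.1.1 hy.2.1]
    _ = generalizedConv u (generalizedConv v F) x := by
        rw [sum_product]
        refine sum_congr rfl fun a ha ↦ ?_
        rw [generalizedConv, Nat.floor_div_natCast, sum_le_div ha, mul_sum, ← sum_filter]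
        refine sum_congr rfl fun b _ ↦ ?_
        rw [div_div, Nat.cast_mul, mul_assoc]

lemma generalizedConv_mono {f : ArithmeticFunction ℝ} (hf : ∀ n, 0 ≤ f n) {F G : ℝ → ℝ}
    (x : ℝ) (h : ∀ n ∈ Ioc 0 ⌊x⌋₊, F (x / n) ≤ G (x / n)) :
    generalizedConv f F x ≤ generalizedConv f G x :=
  sum_le_sum fun n hn ↦ mul_le_mul_of_nonneg_left (h n hn) (hf n)

lemma one_le_div_of_mem_Ioc_floor {x : ℝ} {n : ℕ} (hn : n ∈ Ioc 0 ⌊x⌋₊) : 1 ≤ x / n := by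
  obtain ⟨hn0, hnx⟩ := mem_Ioc.mp hn
  rw [one_le_div (by exact_mod_cast hn0)]
  exact (Nat.le_floor_iff' hn0.ne').mp hnx

lemma mul_apply_prime_pow (u v : ArithmeticFunction ℝ) {p : ℕ} (hp : p.Prime) (j : ℕ) :
    (u * v) (p ^ j) = ∑ x ∈ antidiagonal j, u (p ^ x.1) * v (p ^ x.2) := by
  rw [mul_apply, Nat.sum_divisorsAntidiagonal (fun x y ↦ u x * v y), Nat.sum_divisors_prime_pow hp,
    Nat.sum_antidiagonal_eq_sum_range_succ (fun x y ↦ u (p ^ x) * v (p ^ y))]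
  refine sum_congr rfl fun i hi ↦ ?_
  rw [Nat.pow_div (mem_range_succ_iff.mp hi) hp.pos]

end GeneralizedConvolution

section LogPowerSums

lemma posLog_div_sub_posLog_div_succ_le (x : ℝ) {m : ℕ} (hm : 0 < m) :
    log⁺ (x / m) - log⁺ (x / (m + 1)) ≤ (m : ℝ)⁻¹ := by
  have : (0 : ℝ) < m := mod_cast hm
  have split : x / m = x / (m + 1) * (1 + (m : ℝ)⁻¹) := by field_simp
  have posLog_le : log⁺ (1 + (m : ℝ)⁻¹) ≤ (m : ℝ)⁻¹ := by
    rw [posLog_eq_log (by rw [abs_of_pos (by positivity)]; simp)]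
    linarith [log_le_sub_one_of_pos (show 0 < 1 + (m : ℝ)⁻¹ by positivity)]
  rw [split]
  linarith [posLog_mul (x := x / (m + 1)) (y := 1 + (m : ℝ)⁻¹)]

lemma posLog_pow_sub_le_sum {x : ℝ} (hx : 0 ≤ x) (r N : ℕ) :
    log⁺ x ^ (r + 1) - log⁺ (x / (N + 1)) ^ (r + 1) ≤
      (r + 1) * ∑ m ∈ Ioc 0 N, (m : ℝ)⁻¹ * log⁺ (x / m) ^ r := by
  induction N with
  | zero => simp
  | succ N ih =>
    set u := log⁺ (x / (N + 1))
    set v := log⁺ (x / (N + 1 + 1))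
    have hv : 0 ≤ v := posLog_nonneg
    have hvu : v ≤ u := posLog_le_posLog (by positivity) (by gcongr; linarith)
    have hdiff : u - v ≤ ((N : ℝ) + 1)⁻¹ := by
      simpa [u, v] using posLog_div_sub_posLog_div_succ_le x N.succ_pos
    have pow_diff : u ^ (r + 1) - v ^ (r + 1) ≤ (r + 1) * (((N : ℝ) + 1)⁻¹ * u ^ r) :=
      calc u ^ (r + 1) - v ^ (r + 1) ≤ (u - v) * (r + 1 : ℕ) * u ^ r := by
            have := (le_abs_self _).trans (abs_pow_sub_pow_le u v (r + 1))
            rwa [abs_of_nonneg (sub_nonneg.mpr hvu), abs_of_nonneg hv,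
              abs_of_nonneg (hv.trans hvu), max_eq_left hvu, Nat.add_sub_cancel] at this
        _ ≤ ((N : ℝ) + 1)⁻¹ * (r + 1 : ℕ) * u ^ r := by
            have := hv.trans hvu
            gcongr
        _ = (r + 1) * (((N : ℝ) + 1)⁻¹ * u ^ r) := by push_cast; ring
    rw [sum_Ioc_succ_top N.zero_le, mul_add]
    push_cast
    linarith

lemma log_pow_succ_div_le_sum {x : ℝ} (hx : 1 ≤ x) (r : ℕ) :
    log x ^ (r + 1) / (r + 1) ≤ ∑ n ∈ Ioc 0 ⌊x⌋₊, (n : ℝ)⁻¹ * log (x / n) ^ r := by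
  have hx0 : 0 ≤ x := zero_le_one.trans hx
  have posLog_last : log⁺ (x / (⌊x⌋₊ + 1)) = 0 := by
    rw [posLog_eq_zero_iff, abs_of_nonneg (by positivity), div_le_one (by positivity)]
    exact (Nat.lt_floor_add_one x).le
  have posLog_eq {t : ℝ} (ht : 1 ≤ t) : log⁺ t = log t := posLog_eq_log (ht.trans (le_abs_self t))
  have telescoped := posLog_pow_sub_le_sum hx0 r ⌊x⌋₊
  rw [posLog_last, zero_pow r.succ_ne_zero, sub_zero, posLog_eq hx,
    sum_congr rfl fun n hn ↦ by rw [posLog_eq (one_le_div_of_mem_Ioc_floor hn)]] at telescoped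
  exact (div_le_iff₀' (by positivity)).mpr telescoped

end LogPowerSums

section Reciprocal

open ArithmeticFunction hiding log

/-- The arithmetic function `1 / n`; its Dirichlet powers are `reciprocal ^ g = (d_g(n) / n)_n`,
where `d_g` is the `g`-fold divisor function. -/
noncomputable def reciprocal : ArithmeticFunction ℝ := ⟨fun n ↦ (n : ℝ)⁻¹, by simp⟩

lemma reciprocal_apply (n : ℕ) : reciprocal n = (n : ℝ)⁻¹ := rfl

lemma isMultiplicative_reciprocal : reciprocal.IsMultiplicative :=
  IsMultiplicative.iff_ne_zero.mpr
    ⟨by simp [reciprocal_apply], fun _ _ _ ↦ by simp [reciprocal_apply, mul_comm]⟩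

lemma isMultiplicative_reciprocal_pow (g : ℕ) : (reciprocal ^ g).IsMultiplicative := by
  induction g with
  | zero => exact isMultiplicative_one
  | succ g ih => rw [pow_succ']; exact isMultiplicative_reciprocal.mul ih

lemma reciprocal_pow_nonneg (g n : ℕ) : 0 ≤ (reciprocal ^ g) n := by
  induction g generalizing n with
  | zero => rw [pow_zero, one_apply]; positivity
  | succ g ih =>
    rw [pow_succ', mul_apply]
    exact sum_nonneg fun x _ ↦ mul_nonneg (by simp [reciprocal_apply]) (ih x.2)

lemma reciprocal_prime_pow (p j : ℕ) : reciprocal (p ^ j) = (p : ℝ)⁻¹ ^ j := by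
  rw [reciprocal_apply, Nat.cast_pow, inv_pow]

lemma reciprocal_pow_prime (g : ℕ) {p : ℕ} (hp : p.Prime) : (reciprocal ^ g) p = g / p := by
  induction g with
  | zero => simp [one_apply, hp.ne_one]
  | succ g ih =>
    have map_one := (isMultiplicative_reciprocal_pow g).map_one
    have := mul_apply_prime_pow reciprocal (reciprocal ^ g) hp 1
    rw [← pow_succ', pow_one] at this
    rw [this, Nat.sum_antidiagonal_succ]
    simp only [Nat.antidiagonal_zero, sum_singleton, pow_zero, zero_add, pow_one, map_one, ih,
      reciprocal_apply, Nat.cast_one, Nat.cast_add]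
    ring

lemma reciprocal_pow_prime_pow_le (g : ℕ) {p : ℕ} (hp : p.Prime) (j : ℕ) :
    (reciprocal ^ g) (p ^ j) ≤ (j + 1) ^ g * (p : ℝ)⁻¹ ^ j := by
  induction g generalizing j with
  | zero =>
    obtain rfl | hj := eq_or_ne j 0
    · simp
    · rw [pow_zero, one_apply, if_neg (Nat.one_lt_pow hj hp.one_lt).ne']
      positivity
  | succ g ih =>
    rw [pow_succ', mul_apply_prime_pow _ _ hp]
    calc ∑ x ∈ antidiagonal j, reciprocal (p ^ x.1) * (reciprocal ^ g) (p ^ x.2)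
        ≤ ∑ x ∈ antidiagonal j, ((j : ℝ) + 1) ^ g * (p : ℝ)⁻¹ ^ j := by
          refine sum_le_sum fun x hx ↦ ?_
          rw [HasAntidiagonal.mem_antidiagonal] at hx
          have hxj : (x.2 : ℝ) ≤ j := mod_cast by lia
          calc reciprocal (p ^ x.1) * (reciprocal ^ g) (p ^ x.2)
              ≤ (p : ℝ)⁻¹ ^ x.1 * ((x.2 + 1) ^ g * (p : ℝ)⁻¹ ^ x.2) := by
                rw [reciprocal_prime_pow]
                gcongr
                exact ih x.2
            _ = (x.2 + 1) ^ g * (p : ℝ)⁻¹ ^ j := by rw [← hx, pow_add]; ring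
            _ ≤ (j + 1) ^ g * (p : ℝ)⁻¹ ^ j := by gcongr
      _ = (j + 1) ^ (g + 1) * (p : ℝ)⁻¹ ^ j := by
          rw [sum_const, Nat.card_antidiagonal, nsmul_eq_mul]
          push_cast
          ring

lemma summable_add_one_pow_mul_geometric (g : ℕ) {q : ℝ} (hq : ‖q‖ < 1) :
    Summable fun j : ℕ ↦ ((j : ℝ) + 1) ^ g * q ^ j := by
  have expand (j : ℕ) : ((j : ℝ) + 1) ^ g * q ^ j =
      ∑ i ∈ range (g + 1), (j : ℝ) ^ i * q ^ j * g.choose i := by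
    rw [add_pow, sum_mul]
    exact sum_congr rfl fun i _ ↦ by ring
  simp_rw [expand]
  exact summable_sum fun i _ ↦ (summable_pow_mul_geometric_of_norm_lt_one i hq).mul_right _

lemma inv_prime_le_half {p : ℕ} (hp : p.Prime) : (p : ℝ)⁻¹ ≤ 2⁻¹ := by
  gcongr
  exact_mod_cast hp.two_le

lemma hasSum_reciprocal_pow_prime_pow (g : ℕ) {p : ℕ} (hp : p.Prime) :
    HasSum (fun j ↦ (reciprocal ^ g) (p ^ j)) ((1 - (p : ℝ)⁻¹)⁻¹ ^ g) := by
  have hp0 : 0 ≤ (p : ℝ)⁻¹ := by positivity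
  have hp1 : (p : ℝ)⁻¹ < 1 := (inv_prime_le_half hp).trans_lt (by norm_num)
  have geometric : HasSum (fun j ↦ reciprocal (p ^ j)) (1 - (p : ℝ)⁻¹)⁻¹ := by
    simpa only [reciprocal_prime_pow] using hasSum_geometric_of_lt_one hp0 hp1
  have summable (g : ℕ) : Summable fun j ↦ (reciprocal ^ g) (p ^ j) :=
    .of_nonneg_of_le (fun j ↦ reciprocal_pow_nonneg g _) (reciprocal_pow_prime_pow_le g hp)
      (summable_add_one_pow_mul_geometric g (by rwa [norm_of_nonneg hp0]))
  induction g with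
  | zero =>
    have one_prime_pow (j : ℕ) (hj : j ≠ 0) : (1 : ArithmeticFunction ℝ) (p ^ j) = 0 :=
      one_apply_ne (Nat.one_lt_pow hj hp.one_lt).ne'
    simp_rw [pow_zero]
    simpa using hasSum_single 0 one_prime_pow
  | succ g ih =>
    rw [(summable (g + 1)).hasSum_iff, pow_succ' _ g, pow_succ' _ g]
    simp_rw [mul_apply_prime_pow _ _ hp]
    rw [← ih.tsum_eq, ← geometric.tsum_eq]
    exact (tsum_mul_tsum_eq_tsum_sum_antidiagonal_of_summable_norm
      geometric.summable.norm ih.summable.norm).symm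

lemma sum_reciprocal_pow_le (g N : ℕ) :
    ∑ n ∈ Ioc 0 N, (reciprocal ^ g) n ≤ (1 + log N) ^ g := by
  have : 0 ≤ log N := log_natCast_nonneg N
  have sum_nonneg (g M : ℕ) : 0 ≤ ∑ n ∈ Ioc 0 M, (reciprocal ^ g) n :=
    Finset.sum_nonneg fun n _ ↦ reciprocal_pow_nonneg g n
  have harmonic_le : ∑ n ∈ Ioc 0 N, reciprocal n ≤ 1 + log N := by
    have := harmonic_le_one_add_log N
    rw [harmonic_eq_sum_Icc] at this
    push_cast at this
    exact this
  induction g with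
  | zero =>
    simp only [pow_zero, one_apply, sum_ite_eq']
    split_ifs <;> norm_num
  | succ g ih =>
    rw [pow_succ', pow_succ', sum_Ioc_mul_eq_sum_sum]
    calc ∑ n ∈ Ioc 0 N, reciprocal n * ∑ m ∈ Ioc 0 (N / n), (reciprocal ^ g) m
        ≤ ∑ n ∈ Ioc 0 N, reciprocal n * ∑ m ∈ Ioc 0 N, (reciprocal ^ g) m := by
          refine sum_le_sum fun n _ ↦ mul_le_mul_of_nonneg_left ?_ (by simp [reciprocal_apply])
          exact sum_le_sum_of_subset_of_nonneg (Ioc_subset_Ioc_right (Nat.div_le_self N n))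
            fun m _ _ ↦ reciprocal_pow_nonneg g m
      _ ≤ (1 + log N) * (1 + log N) ^ g := by
          rw [← sum_mul]
          exact mul_le_mul harmonic_le ih (sum_nonneg g N) (by positivity)

lemma log_pow_div_factorial_le_generalizedConv (g : ℕ) {x : ℝ} (hx : 1 ≤ x) :
    log x ^ (g + 1) / (g + 1).factorial ≤ generalizedConv (reciprocal ^ g) log x := by
  induction g generalizing x with
  | zero =>
    have : 1 ∈ Ioc 0 ⌊x⌋₊ := mem_Ioc.mpr ⟨one_pos, Nat.le_floor (by simpa using hx)⟩
    simp [generalizedConv, one_apply, this]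
  | succ g ih =>
    calc log x ^ (g + 2) / (g + 2).factorial
        = log x ^ (g + 2) / ((g + 1 : ℕ) + 1) / (g + 1).factorial := by
          rw [Nat.factorial_succ (g + 1), div_div]
          push_cast
          ring
      _ ≤ (∑ n ∈ Ioc 0 ⌊x⌋₊, (n : ℝ)⁻¹ * log (x / n) ^ (g + 1)) / (g + 1).factorial := by
          gcongr
          exact log_pow_succ_div_le_sum hx (g + 1)
      _ = generalizedConv reciprocal (fun t ↦ log t ^ (g + 1) / (g + 1).factorial) x := by
          simp_rw [generalizedConv, reciprocal_apply, sum_div, mul_div_assoc]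
      _ ≤ generalizedConv reciprocal (generalizedConv (reciprocal ^ g) log) x :=
          generalizedConv_mono (by simp [reciprocal_apply]) x fun n hn ↦
            ih (one_le_div_of_mem_Ioc_floor hn)
      _ = generalizedConv (reciprocal ^ (g + 1)) log x := by rw [← generalizedConv_mul, pow_succ']

end Reciprocal

section Mertens

open scoped Nat

/-- The sum `∑ log n / n² = -ζ'(2)`. -/
noncomputable def sumLogDivSq : ℝ := ∑' n : ℕ, log n / (n : ℝ) ^ 2

lemma summable_log_div_sq : Summable fun n : ℕ ↦ log n / (n : ℝ) ^ 2 := by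
  refine .of_nonneg_of_le (fun n ↦ by positivity) (fun n ↦ ?_)
    ((summable_one_div_nat_rpow.mpr (show (1 : ℝ) < 3 / 2 by norm_num)).mul_left 2)
  obtain rfl | hn := n.eq_zero_or_pos
  · simp
  have hn' : (0 : ℝ) < n := mod_cast hn
  have sq_eq : (n : ℝ) ^ 2 = (n : ℝ) ^ (1 / 2 : ℝ) * (n : ℝ) ^ (3 / 2 : ℝ) := by
    rw [← rpow_add hn', ← rpow_natCast]
    norm_num
  have log_le : log n ≤ (n : ℝ) ^ (1 / 2 : ℝ) / (1 / 2) := log_le_rpow_div hn'.le (by norm_num)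
  calc log n / (n : ℝ) ^ 2
      ≤ (n : ℝ) ^ (1 / 2 : ℝ) / (1 / 2) / ((n : ℝ) ^ (1 / 2 : ℝ) * (n : ℝ) ^ (3 / 2 : ℝ)) := by
        rw [sq_eq]
        gcongr
    _ = 2 * (1 / (n : ℝ) ^ (3 / 2 : ℝ)) := by field_simp

lemma sumLogDivSq_nonneg : 0 ≤ sumLogDivSq := tsum_nonneg fun n ↦ by positivity

lemma sum_log_div_sq_le (s : Finset ℕ) : ∑ n ∈ s, log n / (n : ℝ) ^ 2 ≤ sumLogDivSq :=
  summable_log_div_sq.sum_le_tsum s fun n _ ↦ by positivity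

lemma log_natCast_eq_sum_of_primeFactors_subset {n : ℕ} {s : Finset ℕ} (h : n.primeFactors ⊆ s) :
    log n = ∑ p ∈ s, n.factorization p * log p := by
  rw [log_nat_eq_sum_factorization, Finsupp.sum, Nat.support_factorization]
  refine sum_subset h fun p _ hp ↦ ?_
  rw [← Nat.support_factorization, Finsupp.notMem_support_iff] at hp
  rw [hp, Nat.cast_zero, zero_mul]

lemma primeFactors_subset_primesLE {n N : ℕ} (h : n ≤ N) : n.primeFactors ⊆ Nat.primesLE N :=
  fun _ hp ↦ Nat.mem_primesLE.mpr
    ⟨(Nat.le_of_mem_primeFactors hp).trans h, Nat.prime_of_mem_primeFactors hp⟩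

lemma log_factorial_eq_sum_primesLE (N : ℕ) :
    log N ! = ∑ p ∈ Nat.primesLE N, (N !).factorization p * log p :=
  log_natCast_eq_sum_of_primeFactors_subset fun _ hp ↦
    have hp' := Nat.prime_of_mem_primeFactors hp
    Nat.mem_primesLE.mpr ⟨hp'.dvd_factorial.mp (Nat.dvd_of_mem_primeFactors hp), hp'⟩

lemma log_sub_le_sum_primesLE_log_div {N : ℕ} (hN : 1 ≤ N) :
    log N - (1 + 2 * sumLogDivSq) ≤ ∑ p ∈ Nat.primesLE N, log p / p := by
  have hN' : (0 : ℝ) < N := mod_cast hN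
  have factorization_le {p : ℕ} (hp : p.Prime) :
      ((N !).factorization p : ℝ) ≤ N * (1 / p + 2 / (p : ℝ) ^ 2) := by
    have hp2 : (2 : ℝ) ≤ p := mod_cast hp.two_le
    calc ((N !).factorization p : ℝ) ≤ (N / (p - 1) : ℕ) :=
          mod_cast Nat.factorization_factorial_le_div_pred hp N
      _ ≤ N / (p - 1) := by
          rw [← Nat.cast_pred hp.pos]
          exact Nat.cast_div_le
      _ = N * (1 / (p - 1)) := by rw [mul_one_div]
      _ ≤ N * (1 / p + 2 / (p : ℝ) ^ 2) := by
          gcongr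
          rw [div_add_div _ _ (by positivity) (by positivity),
            div_le_div_iff₀ (by linarith) (by positivity)]
          nlinarith
  have stirling : N * log N - N ≤ log N ! := by
    have := Stirling.le_log_factorial_stirling (Nat.one_le_iff_ne_zero.mp hN)
    have : 0 ≤ log (2 * π) := log_nonneg (by nlinarith [pi_gt_three])
    linarith [log_natCast_nonneg N]
  have legendre : log N ! ≤ N * ((∑ p ∈ Nat.primesLE N, log p / p) + 2 * sumLogDivSq) :=
    calc log N ! = ∑ p ∈ Nat.primesLE N, (N !).factorization p * log p :=
          log_factorial_eq_sum_primesLE N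
      _ ≤ ∑ p ∈ Nat.primesLE N, N * (1 / p + 2 / (p : ℝ) ^ 2) * log p := by
          refine sum_le_sum fun p hp ↦ ?_
          gcongr
          exact factorization_le (Nat.mem_primesLE.mp hp).2
      _ = N * (∑ p ∈ Nat.primesLE N, log p / p +
            2 * ∑ p ∈ Nat.primesLE N, log p / (p : ℝ) ^ 2) := by
          rw [mul_sum, ← sum_add_distrib, mul_sum]
          exact sum_congr rfl fun p _ ↦ by ring
      _ ≤ N * (∑ p ∈ Nat.primesLE N, log p / p + 2 * sumLogDivSq) := by
          gcongr
          exact sum_log_div_sq_le _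
  have := le_of_mul_le_mul_left
    (show (N : ℝ) * (log N - 1) ≤ N * (∑ p ∈ Nat.primesLE N, log p / p + 2 * sumLogDivSq) by
      linarith) hN'
  linarith

lemma sum_primesLE_log_div_le {N : ℕ} (hN : 1 ≤ N) :
    ∑ p ∈ Nat.primesLE N, log p / p ≤ log N + log 4 := by
  have hN' : (0 : ℝ) < N := mod_cast hN
  have div_le {p : ℕ} (hp : p.Prime) : (N : ℝ) / p ≤ (N !).factorization p + 1 := by
    have : N / p ≤ (N !).factorization p := by
      rw [Nat.factorization_factorial hp (Nat.lt_add_of_pos_right (n := p.log N) two_pos)]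
      simpa using single_le_sum (f := fun i ↦ N / p ^ i) (fun _ _ ↦ Nat.zero_le _)
        (mem_Ico.mpr ⟨le_rfl, by lia⟩ : 1 ∈ Ico 1 (p.log N + 2))
    calc (N : ℝ) / p ≤ (N / p : ℕ) + 1 := by
          rw [← Nat.floor_div_eq_div (K := ℝ)]
          exact (Nat.lt_floor_add_one _).le
      _ ≤ (N !).factorization p + 1 := by gcongr
  have chebyshev : ∑ p ∈ Nat.primesLE N, log p ≤ N * log 4 := by
    rw [← Chebyshev.theta_eq_sum_primesLE_log, mul_comm]
    exact Chebyshev.theta_le_log4_mul_x hN'.le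
  have log_factorial_le : log N ! ≤ N * log N := by
    rw [← log_pow]
    exact log_le_log (by positivity) (mod_cast N.factorial_le_pow)
  refine le_of_mul_le_mul_left (a := (N : ℝ)) ?_ hN'
  calc N * ∑ p ∈ Nat.primesLE N, log p / p
      = ∑ p ∈ Nat.primesLE N, N / p * log p := by
        rw [mul_sum]
        exact sum_congr rfl fun p _ ↦ by ring
    _ ≤ ∑ p ∈ Nat.primesLE N, ((N !).factorization p + 1) * log p := by
        refine sum_le_sum fun p hp ↦ ?_
        gcongr
        exact div_le (Nat.mem_primesLE.mp hp).2
    _ = log N ! + ∑ p ∈ Nat.primesLE N, log p := by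
        rw [log_factorial_eq_sum_primesLE, ← sum_add_distrib]
        exact sum_congr rfl fun p _ ↦ by ring
    _ ≤ N * (log N + log 4) := by linarith

/-- The sum `∑_{p ∣ E} log p / p`, through which the sieve estimate depends on `E`. -/
noncomputable def primeFactorLogSum (E : ℕ) : ℝ := ∑ p ∈ E.primeFactors, log p / p

lemma primeFactorLogSum_nonneg (E : ℕ) : 0 ≤ primeFactorLogSum E :=
  sum_nonneg fun p _ ↦ by positivity

lemma one_lt_log_three : 1 < log 3 := by
  rw [lt_log_iff_exp_lt (by norm_num)]
  exact exp_one_lt_three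

lemma sum_primeFactors_log_le (E : ℕ) : ∑ p ∈ E.primeFactors, log p ≤ log E := by
  rw [log_nat_eq_sum_factorization, Finsupp.sum, Nat.support_factorization]
  refine sum_le_sum fun p hp ↦ le_mul_of_one_le_left (by positivity) ?_
  exact_mod_cast (Nat.prime_of_mem_primeFactors hp).factorization_pos_of_dvd
    (Nat.mem_primeFactors.mp hp).2.2 (Nat.dvd_of_mem_primeFactors hp)

lemma primeFactorLogSum_le {E : ℕ} (hE : 1 ≤ E) :
    primeFactorLogSum E ≤ log (log (3 * E)) + (log 4 + 1) := by
  have hE' : (1 : ℝ) ≤ E := mod_cast hE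
  set x := log (3 * E)
  have hx : 1 < x := one_lt_log_three.trans_le (log_le_log (by norm_num) (by linarith))
  have hfloor : 1 ≤ ⌊x⌋₊ := Nat.le_floor (by simpa using hx.le)
  have small_primes : ∑ p ∈ E.primeFactors with p ≤ ⌊x⌋₊, log p / p ≤ log x + log 4 :=
    calc ∑ p ∈ E.primeFactors with p ≤ ⌊x⌋₊, log p / p
        ≤ ∑ p ∈ Nat.primesLE ⌊x⌋₊, log p / p := by
          refine sum_le_sum_of_subset_of_nonneg (fun p hp ↦ ?_) fun p _ _ ↦ by positivity
          rw [mem_filter] at hp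
          exact Nat.mem_primesLE.mpr ⟨hp.2, Nat.prime_of_mem_primeFactors hp.1⟩
      _ ≤ log ⌊x⌋₊ + log 4 := sum_primesLE_log_div_le hfloor
      _ ≤ log x + log 4 := by
          gcongr
          exact Nat.floor_le (by linarith)
  have large_primes : ∑ p ∈ E.primeFactors with ¬p ≤ ⌊x⌋₊, log p / p ≤ 1 :=
    calc ∑ p ∈ E.primeFactors with ¬p ≤ ⌊x⌋₊, log p / p
        ≤ ∑ p ∈ E.primeFactors with ¬p ≤ ⌊x⌋₊, log p / x := by
          refine sum_le_sum fun p hp ↦ ?_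
          have := Nat.lt_of_floor_lt (not_le.mp (mem_filter.mp hp).2)
          gcongr
      _ ≤ ∑ p ∈ E.primeFactors, log p / x :=
          sum_le_sum_of_subset_of_nonneg (filter_subset _ _) fun p _ _ ↦ by positivity
      _ ≤ log E / x := by
          rw [← sum_div]
          gcongr
          exact sum_primeFactors_log_le E
      _ ≤ 1 := (div_le_one (by linarith)).mpr (log_le_log (by linarith) (by linarith))
  rw [primeFactorLogSum, ← sum_filter_add_sum_filter_not _ (· ≤ ⌊x⌋₊)]
  linarith

end Mertens

section CompletelyMultiplicative

open ArithmeticFunction hiding log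
open scoped ArithmeticFunction.Moebius ArithmeticFunction.zeta

/-- The completely multiplicative function with prescribed values `φ p` at the primes `p`. -/
noncomputable def ofPrimeValues (φ : ℕ → ℝ) : ArithmeticFunction ℝ :=
  ⟨fun n ↦ if n = 0 then 0 else n.factorization.prod fun p j ↦ φ p ^ j, by simp⟩

lemma ofPrimeValues_apply (φ : ℕ → ℝ) {n : ℕ} (hn : n ≠ 0) :
    ofPrimeValues φ n = n.factorization.prod fun p j ↦ φ p ^ j := by
  simp [ofPrimeValues, hn]

lemma ofPrimeValues_one (φ : ℕ → ℝ) : ofPrimeValues φ 1 = 1 := by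
  simp [ofPrimeValues_apply]

lemma ofPrimeValues_mul (φ : ℕ → ℝ) (m n : ℕ) :
    ofPrimeValues φ (m * n) = ofPrimeValues φ m * ofPrimeValues φ n := by
  obtain rfl | hm := eq_or_ne m 0
  · simp
  obtain rfl | hn := eq_or_ne n 0
  · simp
  rw [ofPrimeValues_apply φ hm, ofPrimeValues_apply φ hn,
    ofPrimeValues_apply φ (mul_ne_zero hm hn), Nat.factorization_mul hm hn,
    Finsupp.prod_add_index' (fun _ ↦ pow_zero _) fun _ _ _ ↦ pow_add _ _ _]

lemma ofPrimeValues_pow (φ : ℕ → ℝ) (n j : ℕ) :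
    ofPrimeValues φ (n ^ j) = ofPrimeValues φ n ^ j := by
  induction j with
  | zero => simp [ofPrimeValues_one]
  | succ j ih => rw [pow_succ, ofPrimeValues_mul, ih, pow_succ]

lemma ofPrimeValues_prime (φ : ℕ → ℝ) {p : ℕ} (hp : p.Prime) : ofPrimeValues φ p = φ p := by
  simp [ofPrimeValues_apply φ hp.ne_zero, hp.factorization]

lemma ofPrimeValues_nonneg {φ : ℕ → ℝ} (hφ : ∀ p, 0 ≤ φ p) (n : ℕ) : 0 ≤ ofPrimeValues φ n := by
  obtain rfl | hn := eq_or_ne n 0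
  · simp
  rw [ofPrimeValues_apply φ hn]
  exact prod_nonneg fun p _ ↦ pow_nonneg (hφ p) _

lemma isMultiplicative_ofPrimeValues (φ : ℕ → ℝ) : (ofPrimeValues φ).IsMultiplicative :=
  ⟨ofPrimeValues_one φ, fun _ ↦ ofPrimeValues_mul φ _ _⟩

lemma pmul_mul_pmul_of_map_mul {R : Type*} [CommSemiring R] {f : ArithmeticFunction R}
    (hf : ∀ m n, f (m * n) = f m * f n) (u v : ArithmeticFunction R) :
    u.pmul f * v.pmul f = (u * v).pmul f := by
  ext n
  rw [pmul_apply, mul_apply, mul_apply, sum_mul]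
  refine sum_congr rfl fun x hx ↦ ?_
  rw [← (Nat.mem_divisorsAntidiagonal.mp hx).1, hf, pmul_apply, pmul_apply]
  ring

lemma moebius_pmul_mul_ofPrimeValues (φ : ℕ → ℝ) :
    (μ : ArithmeticFunction ℝ).pmul (ofPrimeValues φ) * ofPrimeValues φ = 1 := by
  have := pmul_mul_pmul_of_map_mul (ofPrimeValues_mul φ) (μ : ArithmeticFunction ℝ) ζ
  rw [zeta_pmul, coe_moebius_mul_coe_zeta] at this
  rw [this]
  ext n
  rw [pmul_apply, one_apply]
  split_ifs with h
  · rw [h, ofPrimeValues_one, one_mul]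
  · rw [zero_mul]

lemma moebius_pmul_ofPrimeValues_prime_pow (φ : ℕ → ℝ) {p : ℕ} (hp : p.Prime) (j : ℕ) :
    (μ : ArithmeticFunction ℝ).pmul (ofPrimeValues φ) (p ^ j) =
      if j = 0 then 1 else if j = 1 then -φ p else 0 := by
  rw [pmul_apply, ofPrimeValues_pow, ofPrimeValues_prime φ hp, intCoe_apply]
  split_ifs with h0 h1
  · simp [h0]
  · simp [h1, moebius_apply_prime hp]
  · simp [moebius_apply_prime_pow hp h0, h1]

end CompletelyMultiplicative

section TailBound

variable {u : ℕ → ℝ} {A q : ℝ} {m : ℕ}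

lemma summable_of_abs_le_add_one_pow_mul_geometric (hq0 : 0 ≤ q) (hq1 : q < 1)
    (hu : ∀ j, |u j| ≤ A * ((j + 1) ^ m * q ^ j)) : Summable u :=
  .of_norm_bounded ((summable_add_one_pow_mul_geometric m
    (by rwa [norm_of_nonneg hq0])).mul_left A) hu

lemma abs_tsum_sub_le_of_abs_le_add_one_pow_mul_geometric (hA : 0 ≤ A) (hq0 : 0 ≤ q)
    (hq : q ≤ 2⁻¹) (hu : ∀ j, |u j| ≤ A * ((j + 1) ^ m * q ^ j)) :
    |∑' j, u j - (u 0 + u 1)| ≤ 4 * A * (∑' j : ℕ, ((j : ℝ) + 1) ^ m * 2⁻¹ ^ j) * q ^ 2 := by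
  have hsum := summable_of_abs_le_add_one_pow_mul_geometric hq0 (hq.trans_lt (by norm_num)) hu
  have hgeom := summable_add_one_pow_mul_geometric m (q := 2⁻¹) (by norm_num)
  have tail_le (j : ℕ) :
      ‖u (j + 2)‖ ≤ 4 * A * q ^ 2 * (((j + 2 : ℕ) + 1) ^ m * 2⁻¹ ^ (j + 2)) :=
    calc ‖u (j + 2)‖ ≤ A * (((j + 2 : ℕ) + 1) ^ m * (q ^ j * q ^ 2)) := by
          rw [← pow_add]
          exact hu (j + 2)
      _ ≤ A * (((j + 2 : ℕ) + 1) ^ m * (2⁻¹ ^ j * q ^ 2)) := by gcongr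
      _ = 4 * A * q ^ 2 * (((j + 2 : ℕ) + 1) ^ m * 2⁻¹ ^ (j + 2)) := by ring
  have hgeom_tail := ((summable_nat_add_iff 2).mpr hgeom).hasSum.mul_left (4 * A * q ^ 2)
  rw [← hsum.sum_add_tsum_nat_add 2, sum_range_succ, sum_range_one, add_sub_cancel_left]
  calc |∑' j, u (j + 2)|
      ≤ 4 * A * q ^ 2 * ∑' j : ℕ, (((j + 2 : ℕ) : ℝ) + 1) ^ m * 2⁻¹ ^ (j + 2) :=
        tsum_of_norm_bounded hgeom_tail tail_le
    _ ≤ 4 * A * q ^ 2 * ∑' j : ℕ, ((j : ℝ) + 1) ^ m * 2⁻¹ ^ j := by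
        refine mul_le_mul_of_nonneg_left ?_ (by positivity)
        rw [← hgeom.sum_add_tsum_nat_add 2]
        exact le_add_of_nonneg_left (sum_nonneg fun i _ ↦ by positivity)
    _ = 4 * A * (∑' j : ℕ, ((j : ℝ) + 1) ^ m * 2⁻¹ ^ j) * q ^ 2 := by ring

end TailBound

/-- Bounds `p ^ 2` times the tail over `j ≥ 2` of the local series `∑ (j + 1) |k(p ^ j)|`, where
`k` is `SieveDensity.singular`. -/
noncomputable def tailConst (g : ℕ) : ℝ :=
  4 * (g + 1) * ∑' j : ℕ, ((j : ℝ) + 1) ^ (g + 1) * 2⁻¹ ^ j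

lemma tailConst_nonneg (g : ℕ) : 0 ≤ tailConst g :=
  mul_nonneg (by positivity) (tsum_nonneg fun _ ↦ by positivity)

/-- Bounds `p ^ 2` times the logarithm of the ratio of the local series `∑ |k(p ^ j)|` and
`∑ k(p ^ j)`, where `k` is `SieveDensity.singular`. -/
noncomputable def ratioConst (g : ℕ) : ℝ := 2 * tailConst g * exp ((g + 1) * g ^ 2)

lemma ratioConst_nonneg (g : ℕ) : 0 ≤ ratioConst g :=
  mul_nonneg (mul_nonneg zero_le_two (tailConst_nonneg g)) (exp_pos _).le

lemma exp_neg_sub_mul_sq_le {x A : ℝ} (hA : 0 < A) (h : A⁻¹ ≤ 1 - x) :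
    exp (-x - A * x ^ 2) ≤ 1 - x := by
  have one_sub_pos : 0 < 1 - x := (inv_pos.mpr hA).trans_le h
  have inv_le : (1 - x)⁻¹ ≤ A := inv_le_of_inv_le₀ hA h
  have expand : 1 - (1 - x)⁻¹ = -x - (1 - x)⁻¹ * x ^ 2 := by field_simp; ring
  have := mul_le_mul_of_nonneg_right inv_le (sq_nonneg x)
  rw [← le_log_iff_exp_le one_sub_pos]
  linarith [one_sub_inv_le_log_of_pos one_sub_pos]

/-- The local data of a sieve of dimension `g`: modulo each prime `p` one removes `ρ p` residue
classes, where `ρ p` takes its generic value `g` unless `p` divides the discriminant-like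
integer `E`. -/
structure SieveDensity (g : ℕ) where
  ρ : ℕ → ℕ
  E : ℕ
  one_le_E : 1 ≤ E
  ρ_le {p : ℕ} : p.Prime → ρ p ≤ g
  ρ_lt {p : ℕ} : p.Prime → ρ p < p
  ρ_eq {p : ℕ} : p.Prime → ¬ p ∣ E → ρ p = g

namespace SieveDensity

open ArithmeticFunction hiding log
open scoped ArithmeticFunction.Moebius

variable {g : ℕ} (S : SieveDensity g)

/-- The completely multiplicative density of the sieve, with `f(p) = ρ(p) / p`. -/
noncomputable def density : ArithmeticFunction ℝ := ofPrimeValues fun p ↦ S.ρ p / p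

/-- The Dirichlet quotient `k` of the generic density `d_g(n) / n` by the density of the sieve.
Its sum is the singular series. -/
noncomputable def singular : ArithmeticFunction ℝ :=
  reciprocal ^ g * (μ : ArithmeticFunction ℝ).pmul S.density

lemma density_one : S.density 1 = 1 := ofPrimeValues_one _

lemma density_mul (m n : ℕ) : S.density (m * n) = S.density m * S.density n :=
  ofPrimeValues_mul _ m n

lemma density_prime {p : ℕ} (hp : p.Prime) : S.density p = S.ρ p / p := ofPrimeValues_prime _ hp

lemma density_nonneg (n : ℕ) : 0 ≤ S.density n := ofPrimeValues_nonneg (fun _ ↦ by positivity) n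

lemma singular_mul_density : S.singular * S.density = reciprocal ^ g := by
  rw [singular, density, mul_assoc, moebius_pmul_mul_ofPrimeValues, mul_one]

lemma isMultiplicative_singular : S.singular.IsMultiplicative :=
  (isMultiplicative_reciprocal_pow g).mul
    (isMultiplicative_moebius.intCast.pmul (isMultiplicative_ofPrimeValues _))

lemma abs_abs_singular_le (p j : ℕ) :
    |(|S.singular (p ^ j)|)| ≤ (j + 1) * |S.singular (p ^ j)| := by
  rw [abs_abs]
  exact le_mul_of_one_le_left (abs_nonneg _) (by linarith [j.cast_nonneg (α := ℝ)])

lemma abs_mul_abs_singular_le (p j : ℕ) :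
    |(j : ℝ) * (|S.singular (p ^ j)|)| ≤ (j + 1) * |S.singular (p ^ j)| := by
  rw [abs_mul, abs_abs, Nat.abs_cast]
  gcongr
  simp

section LocalFactors

variable {p : ℕ} (hp : p.Prime)

include hp

lemma singular_prime_pow_succ (j : ℕ) :
    S.singular (p ^ (j + 1)) =
      (reciprocal ^ g) (p ^ (j + 1)) - S.ρ p / p * (reciprocal ^ g) (p ^ j) := by
  rw [singular, mul_apply_prime_pow _ _ hp, Nat.sum_antidiagonal_succ', sum_eq_single (j, 0)]
  · rw [show p ^ (j + 1, 0).2 = p ^ 0 from rfl, density, moebius_pmul_ofPrimeValues_prime_pow _ hp,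
      moebius_pmul_ofPrimeValues_prime_pow _ hp]
    simp
    ring
  · intro x hx hne
    have : x.2 ≠ 0 := fun h ↦ hne (by ext <;> simp_all)
    simp [density, moebius_pmul_ofPrimeValues_prime_pow _ hp, this]
  · simp

lemma singular_prime : S.singular p = (g - S.ρ p) / p := by
  have := S.singular_prime_pow_succ hp 0
  rw [zero_add, pow_one, pow_zero, reciprocal_pow_prime g hp,
    (isMultiplicative_reciprocal_pow g).map_one] at this
  rw [this]
  ring

lemma natCast_ρ_le : (S.ρ p : ℝ) ≤ g := mod_cast S.ρ_le hp

lemma singular_prime_nonneg : 0 ≤ S.singular p := by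
  rw [S.singular_prime hp]
  exact div_nonneg (sub_nonneg.mpr (S.natCast_ρ_le hp)) p.cast_nonneg

lemma singular_prime_le : S.singular p ≤ if p ∣ S.E then (g : ℝ) / p else 0 := by
  rw [S.singular_prime hp]
  split_ifs with h
  · gcongr
    exact sub_le_self _ (Nat.cast_nonneg _)
  · simp [S.ρ_eq hp h]

lemma abs_singular_prime_pow_le (j : ℕ) :
    |S.singular (p ^ j)| ≤ (g + 1) * ((j + 1) ^ g * (p : ℝ)⁻¹ ^ j) := by
  obtain _ | j := j
  · simp [S.isMultiplicative_singular.map_one]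
  have hρ := S.natCast_ρ_le hp
  have := reciprocal_pow_nonneg g (p ^ j)
  have shifted : S.ρ p / p * (reciprocal ^ g) (p ^ j) ≤
      g * (((j + 1 : ℕ) + 1) ^ g * (p : ℝ)⁻¹ ^ (j + 1)) :=
    calc S.ρ p / p * (reciprocal ^ g) (p ^ j) ≤ g / p * ((j + 1) ^ g * (p : ℝ)⁻¹ ^ j) := by
          gcongr
          exact reciprocal_pow_prime_pow_le g hp j
      _ ≤ g / p * (((j + 1 : ℕ) + 1) ^ g * (p : ℝ)⁻¹ ^ j) := by
          gcongr
          exact j.le_succ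
      _ = g * (((j + 1 : ℕ) + 1) ^ g * (p : ℝ)⁻¹ ^ (j + 1)) := by ring
  rw [S.singular_prime_pow_succ hp]
  calc _ ≤ |(reciprocal ^ g) (p ^ (j + 1))| + |S.ρ p / p * (reciprocal ^ g) (p ^ j)| := abs_sub _ _
    _ ≤ ((j + 1 : ℕ) + 1) ^ g * (p : ℝ)⁻¹ ^ (j + 1) +
          g * (((j + 1 : ℕ) + 1) ^ g * (p : ℝ)⁻¹ ^ (j + 1)) := by
        rw [abs_of_nonneg (reciprocal_pow_nonneg g _), abs_of_nonneg (by positivity)]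
        exact add_le_add (reciprocal_pow_prime_pow_le g hp _) shifted
    _ = (g + 1) * (((j + 1 : ℕ) + 1) ^ g * (p : ℝ)⁻¹ ^ (j + 1)) := by ring

lemma abs_le_of_abs_le_abs_singular {u : ℕ → ℝ}
    (hu : ∀ j, |u j| ≤ (j + 1) * |S.singular (p ^ j)|) (j : ℕ) :
    |u j| ≤ (g + 1) * ((j + 1) ^ (g + 1) * (p : ℝ)⁻¹ ^ j) :=
  calc |u j| ≤ (j + 1) * ((g + 1) * ((j + 1) ^ g * (p : ℝ)⁻¹ ^ j)) := by
        refine (hu j).trans ?_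
        gcongr
        exact S.abs_singular_prime_pow_le hp j
    _ = (g + 1) * ((j + 1) ^ (g + 1) * (p : ℝ)⁻¹ ^ j) := by ring

lemma summable_of_abs_le_abs_singular {u : ℕ → ℝ}
    (hu : ∀ j, |u j| ≤ (j + 1) * |S.singular (p ^ j)|) : Summable u :=
  summable_of_abs_le_add_one_pow_mul_geometric (by positivity)
    ((inv_prime_le_half hp).trans_lt (by norm_num)) (S.abs_le_of_abs_le_abs_singular hp hu)

lemma abs_tsum_sub_le_of_abs_le_abs_singular {u : ℕ → ℝ}
    (hu : ∀ j, |u j| ≤ (j + 1) * |S.singular (p ^ j)|) :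
    |∑' j, u j - (u 0 + u 1)| ≤ tailConst g / p ^ 2 := by
  rw [div_eq_mul_inv, ← inv_pow]
  exact abs_tsum_sub_le_of_abs_le_add_one_pow_mul_geometric (by positivity) (by positivity)
    (inv_prime_le_half hp) (S.abs_le_of_abs_le_abs_singular hp hu)

lemma summable_abs_singular_prime_pow : Summable fun j ↦ |S.singular (p ^ j)| :=
  S.summable_of_abs_le_abs_singular hp fun j ↦ S.abs_abs_singular_le p j

lemma summable_mul_abs_singular_prime_pow :
    Summable fun j : ℕ ↦ (j : ℝ) * |S.singular (p ^ j)| :=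
  S.summable_of_abs_le_abs_singular hp fun j ↦ S.abs_mul_abs_singular_le p j

lemma tsum_abs_singular_prime_pow_le :
    ∑' j, |S.singular (p ^ j)| ≤ 1 + S.singular p + tailConst g / p ^ 2 := by
  have := S.abs_tsum_sub_le_of_abs_le_abs_singular hp (S.abs_abs_singular_le p)
  simp only [pow_zero, pow_one, S.isMultiplicative_singular.map_one, abs_one,
    abs_of_nonneg (S.singular_prime_nonneg hp)] at this
  linarith [le_abs_self (∑' j, |S.singular (p ^ j)| - (1 + S.singular p))]

lemma tsum_mul_abs_singular_prime_pow_le :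
    ∑' j : ℕ, (j : ℝ) * |S.singular (p ^ j)| ≤ S.singular p + tailConst g / p ^ 2 := by
  have := S.abs_tsum_sub_le_of_abs_le_abs_singular hp (S.abs_mul_abs_singular_le p)
  simp only [pow_one, Nat.cast_zero, Nat.cast_one, zero_mul, one_mul, zero_add,
    abs_of_nonneg (S.singular_prime_nonneg hp)] at this
  linarith [le_abs_self (∑' j : ℕ, (j : ℝ) * |S.singular (p ^ j)| - S.singular p)]

lemma le_tsum_singular_prime_pow :
    1 + S.singular p - tailConst g / p ^ 2 ≤ ∑' j, S.singular (p ^ j) := by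
  have := S.abs_tsum_sub_le_of_abs_le_abs_singular hp
    fun j ↦ (le_abs_self _).trans (S.abs_abs_singular_le p j)
  simp only [pow_zero, pow_one, S.isMultiplicative_singular.map_one] at this
  linarith [neg_abs_le (∑' j, S.singular (p ^ j) - (1 + S.singular p))]

lemma tsum_singular_prime_pow :
    ∑' j, S.singular (p ^ j) = (1 - S.ρ p / p) * (1 - (p : ℝ)⁻¹)⁻¹ ^ g := by
  have moebius_hasSum : HasSum (fun j ↦ (μ : ArithmeticFunction ℝ).pmul S.density (p ^ j))
      (1 - S.ρ p / p) := by
    simp_rw [density, moebius_pmul_ofPrimeValues_prime_pow _ hp]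
    set F : ℕ → ℝ := fun j ↦ if j = 0 then 1 else if j = 1 then -((S.ρ p : ℝ) / p) else 0
    have supported (j : ℕ) (hj : j ∉ range 2) : F j = 0 := by
      rw [mem_range] at hj
      simp only [F, if_neg (show j ≠ 0 by lia), if_neg (show j ≠ 1 by lia)]
    have : HasSum F (∑ j ∈ range 2, F j) := hasSum_sum_of_ne_finset_zero supported
    simpa [F, sum_range_succ, ← sub_eq_add_neg] using this
  have generic_hasSum := hasSum_reciprocal_pow_prime_pow g hp
  simp_rw [singular, mul_apply_prime_pow _ _ hp]
  rw [← moebius_hasSum.tsum_eq, ← generic_hasSum.tsum_eq, mul_comm]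
  exact (tsum_mul_tsum_eq_tsum_sum_antidiagonal_of_summable_norm
    generic_hasSum.summable.norm moebius_hasSum.summable.norm).symm

lemma exp_neg_le_tsum_singular_prime_pow :
    exp (-((g + 1) * g ^ 2 / p ^ 2)) ≤ ∑' j, S.singular (p ^ j) := by
  have inv_lt_one : 0 < 1 - (p : ℝ)⁻¹ := by linarith [inv_prime_le_half hp]
  have hxg : (S.ρ p : ℝ) / p ≤ g / p := div_le_div_of_nonneg_right (S.natCast_ρ_le hp) p.cast_nonneg
  set x := (S.ρ p : ℝ) / p
  have one_sub_ge : ((g : ℝ) + 1)⁻¹ ≤ 1 - x := by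
    have hρ : (S.ρ p : ℝ) + 1 ≤ p := mod_cast S.ρ_lt hp
    calc ((g : ℝ) + 1)⁻¹ ≤ ((S.ρ p : ℝ) + 1)⁻¹ :=
          inv_anti₀ (by positivity) (by linarith [S.natCast_ρ_le hp])
      _ = 1 - S.ρ p / (S.ρ p + 1) := by field_simp; ring
      _ ≤ 1 - x := sub_le_sub_left (div_le_div_of_nonneg_left (by positivity) (by positivity) hρ) 1
  have density_ge : exp (-(g / p) - (g + 1) * g ^ 2 / p ^ 2) ≤ 1 - x :=
    calc exp (-(g / p) - (g + 1) * g ^ 2 / p ^ 2) ≤ exp (-x - (g + 1) * x ^ 2) := by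
          rw [exp_le_exp, mul_div_assoc, ← div_pow]
          gcongr
      _ ≤ 1 - x := exp_neg_sub_mul_sq_le (by positivity) one_sub_ge
  have euler_ge : exp (g / p) ≤ (1 - (p : ℝ)⁻¹)⁻¹ ^ g := by
    rw [div_eq_mul_inv, exp_nat_mul]
    gcongr
    rw [le_inv_comm₀ (exp_pos _) inv_lt_one, ← exp_neg]
    exact one_sub_le_exp_neg _
  rw [S.tsum_singular_prime_pow hp]
  calc exp (-((g + 1) * g ^ 2 / p ^ 2))
      = exp (-(g / p) - (g + 1) * g ^ 2 / p ^ 2) * exp (g / p) := by rw [← exp_add]; ring_nf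
    _ ≤ (1 - x) * (1 - (p : ℝ)⁻¹)⁻¹ ^ g := by
        have := (exp_pos _).le.trans density_ge
        gcongr

lemma tsum_abs_singular_prime_pow_le_tsum_mul :
    ∑' j, |S.singular (p ^ j)| ≤ (∑' j, S.singular (p ^ j)) * exp (ratioConst g / p ^ 2) := by
  have hp1 : (1 : ℝ) ≤ p := mod_cast hp.one_lt.le
  set s := ∑' j, S.singular (p ^ j)
  have s_ge : exp (-((g + 1) * g ^ 2)) ≤ s := by
    refine le_trans ?_ (S.exp_neg_le_tsum_singular_prime_pow hp)
    gcongr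
    exact div_le_self (by positivity) (one_le_pow₀ hp1)
  have := tailConst_nonneg g
  calc ∑' j, |S.singular (p ^ j)| ≤ s + 2 * (tailConst g / p ^ 2) := by
        linarith [S.tsum_abs_singular_prime_pow_le hp, S.le_tsum_singular_prime_pow hp]
    _ = s + exp (-((g + 1) * g ^ 2)) * (ratioConst g / p ^ 2) := by
        rw [ratioConst, exp_neg]
        field_simp
    _ ≤ s + s * (ratioConst g / p ^ 2) := by
        rw [ratioConst]
        gcongr
    _ = s * (ratioConst g / p ^ 2 + 1) := by ring
    _ ≤ s * exp (ratioConst g / p ^ 2) := by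
        have := (exp_pos _).le.trans s_ge
        gcongr
        exact add_one_le_exp _

end LocalFactors

end SieveDensity

section EulerProduct

lemma sum_one_div_sq_le (s : Finset ℕ) : ∑ n ∈ s, 1 / (n : ℝ) ^ 2 ≤ π ^ 2 / 6 :=
  sum_le_hasSum s (fun _ _ ↦ by positivity) hasSum_zeta_two

lemma sum_primes_const_div_sq_le {c : ℝ} (hc : 0 ≤ c) (s : Finset Nat.Primes) :
    ∑ p ∈ s, c / ((p : ℕ) : ℝ) ^ 2 ≤ c * (π ^ 2 / 6) := by
  have := sum_one_div_sq_le (s.map ⟨(↑), Nat.Primes.coe_nat_injective⟩)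
  rw [sum_map] at this
  simp_rw [← mul_one_div c, ← mul_sum]
  exact mul_le_mul_of_nonneg_left this hc

variable {f : ℕ → ℝ} (hf : ∀ n, 0 ≤ f n)
  (hmul : ∀ {m n : ℕ}, m.Coprime n → f (m * n) = f m * f n)

include hf hmul

lemma summable_of_prod_primesBelow_le (hf0 : f 0 = 0) (hf1 : f 1 = 1)
    (hsum : ∀ {p : ℕ}, p.Prime → Summable fun j ↦ f (p ^ j)) {c : ℝ}
    (hc : ∀ N : ℕ, ∏ p ∈ N.primesBelow, ∑' j, f (p ^ j) ≤ c) : Summable f := by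
  refine summable_of_sum_range_le hf fun N ↦ le_trans ?_ (hc N)
  have hasSum_smooth := (EulerProduct.summable_and_hasSum_smoothNumbers_prod_primesBelow_tsum
    hf1 hmul (fun hp ↦ by simpa [abs_of_nonneg (hf _)] using hsum hp) N).2
  have sum_eq : ∑ n ∈ range N with n ∈ N.smoothNumbers, f n = ∑ n ∈ range N, f n := by
    refine sum_filter_of_ne fun n hn hfn ↦ ?_
    exact Nat.mem_smoothNumbers_of_lt (Nat.pos_of_ne_zero fun h ↦ hfn (h ▸ hf0)) (mem_range.mp hn)
  rw [← sum_eq, ← sum_subtype_eq_sum_filter]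
  exact sum_le_hasSum _ (fun n _ ↦ hf n) hasSum_smooth

lemma sum_factorization_mul_le (hsum : Summable f) {p : ℕ} (hp : p.Prime)
    (hsum_p : Summable fun j : ℕ ↦ j * f (p ^ j)) (M : ℕ) :
    ∑ b ∈ Ioc 0 M, b.factorization p * f b ≤ (∑' j : ℕ, j * f (p ^ j)) * ∑' n, f n := by
  set split : ℕ → ℕ × ℕ := fun b ↦ (b.factorization p, b / p ^ b.factorization p)
  set F : ℕ × ℕ → ℝ := fun x ↦ x.1 * f (p ^ x.1) * f x.2
  have F_nonneg (x : ℕ × ℕ) : 0 ≤ F x :=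
    mul_nonneg (mul_nonneg x.1.cast_nonneg (hf _)) (hf _)
  have F_split {b : ℕ} (hb : b ∈ Ioc 0 M) : b.factorization p * f b = F (split b) := by
    have coprime := (Nat.coprime_ordCompl hp (mem_Ioc.mp hb).1.ne').pow_left (b.factorization p)
    simp only [F, split]
    rw [mul_assoc, ← hmul coprime, Nat.ordProj_mul_ordCompl_eq_self]
  have split_injective : split.Injective := fun b c hbc ↦ by
    simp only [split, Prod.mk.injEq] at hbc
    rw [← Nat.ordProj_mul_ordCompl_eq_self b p, ← Nat.ordProj_mul_ordCompl_eq_self c p, hbc.2,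
      hbc.1]
  have split_mem : (Ioc 0 M).image split ⊆ range (M + 1) ×ˢ Ioc 0 M := by
    refine image_subset_iff.mpr fun b hb ↦ ?_
    obtain ⟨hb0, hbM⟩ := mem_Ioc.mp hb
    have := Nat.factorization_lt (n := b) p hb0.ne'
    exact mem_product.mpr ⟨mem_range.mpr (by lia),
      mem_Ioc.mpr ⟨Nat.ordCompl_pos p hb0.ne', (Nat.div_le_self _ _).trans hbM⟩⟩
  calc ∑ b ∈ Ioc 0 M, b.factorization p * f b = ∑ x ∈ (Ioc 0 M).image split, F x := by
        rw [sum_image split_injective.injOn]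
        exact sum_congr rfl fun b hb ↦ F_split hb
    _ ≤ ∑ x ∈ range (M + 1) ×ˢ Ioc 0 M, F x :=
        sum_le_sum_of_subset_of_nonneg split_mem fun x _ _ ↦ F_nonneg x
    _ = (∑ j ∈ range (M + 1), j * f (p ^ j)) * ∑ m ∈ Ioc 0 M, f m := by
        rw [sum_mul_sum, sum_product]
    _ ≤ (∑' j : ℕ, j * f (p ^ j)) * ∑' n, f n := by
        have term_nonneg (j : ℕ) : 0 ≤ j * f (p ^ j) := mul_nonneg j.cast_nonneg (hf _)
        exact mul_le_mul (hsum_p.sum_le_tsum _ fun j _ ↦ term_nonneg j)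
          (hsum.sum_le_tsum _ fun n _ ↦ hf n) (sum_nonneg fun n _ ↦ hf n) (tsum_nonneg term_nonneg)

end EulerProduct

lemma sum_mul_log_eq_sum_primesLE (f : ℕ → ℝ) (M : ℕ) :
    ∑ b ∈ Ioc 0 M, f b * log b =
      ∑ p ∈ Nat.primesLE M, log p * ∑ b ∈ Ioc 0 M, b.factorization p * f b := by
  simp_rw [mul_sum]
  rw [sum_comm]
  refine sum_congr rfl fun b hb ↦ ?_
  rw [log_natCast_eq_sum_of_primeFactors_subset
    (primeFactors_subset_primesLE (mem_Ioc.mp hb).2), mul_sum]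
  exact sum_congr rfl fun p _ ↦ by ring

namespace SieveDensity

variable {g : ℕ} (S : SieveDensity g)

/-- The singular series `∏_p (1 - ρ(p) / p) (1 - 1 / p)^{-g}`, as a sum. -/
noncomputable def singularSeries : ℝ := ∑' n, S.singular n

lemma abs_singular_mul {m n : ℕ} (h : m.Coprime n) :
    |S.singular (m * n)| = |S.singular m| * |S.singular n| := by
  rw [S.isMultiplicative_singular.map_mul_of_coprime h, abs_mul]

lemma abs_singular_one : |S.singular 1| = 1 := by simp [S.isMultiplicative_singular.map_one]

lemma mem_primeFactors_E {p : ℕ} (hp : p.Prime) (h : p ∣ S.E) : p ∈ S.E.primeFactors :=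
  Nat.mem_primeFactors.mpr ⟨hp, h, (Nat.one_le_iff_ne_zero.mp S.one_le_E)⟩

lemma prod_primesBelow_tsum_abs_singular_le (N : ℕ) :
    ∏ p ∈ N.primesBelow, ∑' j, |S.singular (p ^ j)| ≤
      exp (g * #S.E.primeFactors + tailConst g * (π ^ 2 / 6)) := by
  set e : ℕ → ℝ := fun p ↦ (if p ∣ S.E then (g : ℝ) else 0) + tailConst g * (1 / (p : ℝ) ^ 2)
  have factor_le {p : ℕ} (hp : p.Prime) : ∑' j, |S.singular (p ^ j)| ≤ exp (e p) := by
    have singular_le : S.singular p ≤ if p ∣ S.E then (g : ℝ) else 0 := by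
      refine (S.singular_prime_le hp).trans ?_
      split_ifs
      · exact div_le_self g.cast_nonneg (mod_cast hp.one_lt.le)
      · rfl
    have tail_eq : tailConst g * (1 / (p : ℝ) ^ 2) = tailConst g / p ^ 2 := mul_one_div _ _
    linarith [S.tsum_abs_singular_prime_pow_le hp, add_one_le_exp (e p)]
  calc ∏ p ∈ N.primesBelow, ∑' j, |S.singular (p ^ j)|
      ≤ ∏ p ∈ N.primesBelow, exp (e p) :=
        prod_le_prod (fun p _ ↦ tsum_nonneg fun j ↦ abs_nonneg _)
          fun p hp ↦ factor_le (Nat.prime_of_mem_primesBelow hp)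
    _ = exp (#{p ∈ N.primesBelow | p ∣ S.E} * g +
          tailConst g * ∑ p ∈ N.primesBelow, 1 / (p : ℝ) ^ 2) := by
        rw [← exp_sum, sum_add_distrib, ← sum_filter, sum_const, nsmul_eq_mul, mul_sum]
    _ ≤ exp (g * #S.E.primeFactors + tailConst g * (π ^ 2 / 6)) := by
        have := tailConst_nonneg g
        rw [mul_comm (g : ℝ)]
        gcongr
        · intro p hp
          rw [mem_filter] at hp
          exact S.mem_primeFactors_E (Nat.prime_of_mem_primesBelow hp.1) hp.2
        · exact sum_one_div_sq_le _

lemma summable_abs_singular : Summable fun n ↦ |S.singular n| :=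
  summable_of_prod_primesBelow_le (fun _ ↦ abs_nonneg _) S.abs_singular_mul (by simp)
    S.abs_singular_one S.summable_abs_singular_prime_pow S.prod_primesBelow_tsum_abs_singular_le

lemma hasProd_singularSeries :
    HasProd (fun p : Nat.Primes ↦ ∑' j, S.singular (p ^ j)) S.singularSeries :=
  S.isMultiplicative_singular.eulerProduct_hasProd S.summable_abs_singular

lemma hasProd_tsum_abs_singular :
    HasProd (fun p : Nat.Primes ↦ ∑' j, |S.singular (p ^ j)|) (∑' n, |S.singular n|) :=
  EulerProduct.eulerProduct_hasProd (f := fun n ↦ |S.singular n|) S.abs_singular_one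
    S.abs_singular_mul (by simpa using S.summable_abs_singular) (by simp)

lemma singularSeries_ge :
    exp (-((g + 1) * g ^ 2 * (π ^ 2 / 6))) ≤ S.singularSeries := by
  refine ge_of_tendsto' S.hasProd_singularSeries fun s ↦ ?_
  calc exp (-((g + 1) * g ^ 2 * (π ^ 2 / 6)))
      ≤ exp (∑ p ∈ s, -((g + 1) * g ^ 2 / ((p : ℕ) : ℝ) ^ 2)) := by
        rw [exp_le_exp, sum_neg_distrib, neg_le_neg_iff]
        exact sum_primes_const_div_sq_le (by positivity) s
    _ = ∏ p ∈ s, exp (-((g + 1) * g ^ 2 / ((p : ℕ) : ℝ) ^ 2)) := exp_sum _ _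
    _ ≤ ∏ p ∈ s, ∑' j, S.singular (p ^ j) :=
        prod_le_prod (fun _ _ ↦ (exp_pos _).le) fun p _ ↦
          S.exp_neg_le_tsum_singular_prime_pow p.2

lemma singularSeries_pos : 0 < S.singularSeries := (exp_pos _).trans_le S.singularSeries_ge

lemma tsum_abs_singular_le :
    ∑' n, |S.singular n| ≤ S.singularSeries * exp (ratioConst g * (π ^ 2 / 6)) := by
  have := ratioConst_nonneg g
  refine le_of_tendsto_of_tendsto' S.hasProd_tsum_abs_singular
    (S.hasProd_singularSeries.mul_const _) fun s ↦ ?_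
  calc ∏ p ∈ s, ∑' j, |S.singular (p ^ j)|
      ≤ ∏ p ∈ s, (∑' j, S.singular (p ^ j)) * exp (ratioConst g / ((p : ℕ) : ℝ) ^ 2) :=
        prod_le_prod (fun _ _ ↦ tsum_nonneg fun _ ↦ abs_nonneg _) fun p _ ↦
          S.tsum_abs_singular_prime_pow_le_tsum_mul p.2
    _ = (∏ p ∈ s, ∑' j, S.singular (p ^ j)) *
          exp (∑ p ∈ s, ratioConst g / ((p : ℕ) : ℝ) ^ 2) := by
        rw [prod_mul_distrib, ← exp_sum]
    _ ≤ (∏ p ∈ s, ∑' j, S.singular (p ^ j)) * exp (ratioConst g * (π ^ 2 / 6)) := by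
        refine mul_le_mul_of_nonneg_left ?_ (prod_nonneg fun p _ ↦ ?_)
        · exact exp_le_exp.mpr (sum_primes_const_div_sq_le this s)
        · exact (exp_pos _).le.trans (S.exp_neg_le_tsum_singular_prime_pow p.2)

/-- Bounds the logarithmic moment `∑ |k(b)| log b` relative to `∑ |k(b)|`, where `k` is
`SieveDensity.singular`. -/
noncomputable def logMoment : ℝ := g * primeFactorLogSum S.E + tailConst g * sumLogDivSq

lemma logMoment_nonneg : 0 ≤ S.logMoment :=
  add_nonneg (mul_nonneg g.cast_nonneg (primeFactorLogSum_nonneg _))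
    (mul_nonneg (tailConst_nonneg g) sumLogDivSq_nonneg)

lemma sum_primesLE_log_div_of_dvd_le (M : ℕ) :
    ∑ p ∈ Nat.primesLE M with p ∣ S.E, log p / p ≤ primeFactorLogSum S.E := by
  refine sum_le_sum_of_subset_of_nonneg (fun p hp ↦ ?_) fun p _ _ ↦ by positivity
  rw [mem_filter] at hp
  exact S.mem_primeFactors_E (Nat.mem_primesLE.mp hp.1).2 hp.2

lemma sum_abs_singular_mul_log_le (M : ℕ) :
    ∑ b ∈ Ioc 0 M, |S.singular b| * log b ≤ (∑' n, |S.singular n|) * S.logMoment := by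
  have abs_nonneg : 0 ≤ ∑' n, |S.singular n| := tsum_nonneg fun _ ↦ abs_nonneg _
  have := tailConst_nonneg g
  set A := ∑' n, |S.singular n|
  have factorization_sum_le {p : ℕ} (hp : p.Prime) :
      ∑ b ∈ Ioc 0 M, b.factorization p * |S.singular b| ≤
        ((if p ∣ S.E then (g : ℝ) / p else 0) + tailConst g / p ^ 2) * A :=
    (sum_factorization_mul_le (fun _ ↦ _root_.abs_nonneg _) S.abs_singular_mul
      S.summable_abs_singular hp (S.summable_mul_abs_singular_prime_pow hp) M).trans
      (mul_le_mul_of_nonneg_right (by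
        linarith [S.tsum_mul_abs_singular_prime_pow_le hp, S.singular_prime_le hp]) abs_nonneg)
  rw [sum_mul_log_eq_sum_primesLE]
  calc ∑ p ∈ Nat.primesLE M, log p * ∑ b ∈ Ioc 0 M, b.factorization p * |S.singular b|
      ≤ ∑ p ∈ Nat.primesLE M,
          log p * (((if p ∣ S.E then (g : ℝ) / p else 0) + tailConst g / p ^ 2) * A) := by
        refine sum_le_sum fun p hp ↦ ?_
        exact mul_le_mul_of_nonneg_left (factorization_sum_le (Nat.mem_primesLE.mp hp).2)
          (log_natCast_nonneg p)
    _ = A * (g * ∑ p ∈ Nat.primesLE M with p ∣ S.E, log p / p +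
          tailConst g * ∑ p ∈ Nat.primesLE M, log p / (p : ℝ) ^ 2) := by
        rw [sum_filter, mul_sum, mul_sum, ← sum_add_distrib, mul_sum]
        refine sum_congr rfl fun p _ ↦ ?_
        split_ifs <;> ring
    _ ≤ A * S.logMoment := by
        rw [logMoment]
        gcongr
        · exact S.sum_primesLE_log_div_of_dvd_le M
        · exact sum_log_div_sq_le _

end SieveDensity

section GeneralizedConvolutionLog

variable {f : ArithmeticFunction ℝ} (hf : ∀ n, 0 ≤ f n) {x : ℝ}

lemma Ioc_floor_div_subset (hx : 0 ≤ x) {b : ℝ} (hb : 1 ≤ b) :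
    Ioc 0 ⌊x / b⌋₊ ⊆ Ioc 0 ⌊x⌋₊ :=
  Ioc_subset_Ioc_right (Nat.floor_mono (div_le_self hx hb))

include hf

lemma generalizedConv_one_nonneg : 0 ≤ generalizedConv f 1 x :=
  sum_nonneg fun n _ ↦ mul_nonneg (hf n) zero_le_one

lemma generalizedConv_log_div_le (hx : 0 ≤ x) {b : ℝ} (hb : 1 ≤ b) :
    generalizedConv f log (x / b) ≤ generalizedConv f log x :=
  calc generalizedConv f log (x / b) ≤ ∑ n ∈ Ioc 0 ⌊x / b⌋₊, f n * log (x / n) := by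
        refine sum_le_sum fun n hn ↦ mul_le_mul_of_nonneg_left ?_ (hf n)
        have := one_le_div_of_mem_Ioc_floor hn
        gcongr
        exact div_le_self hx hb
    _ ≤ generalizedConv f log x :=
        sum_le_sum_of_subset_of_nonneg (Ioc_floor_div_subset hx hb) fun n hn _ ↦
          mul_nonneg (hf n) (log_nonneg (one_le_div_of_mem_Ioc_floor hn))

lemma generalizedConv_log_sub_le (hx : 0 ≤ x) {b : ℝ} (hb : 1 ≤ b) :
    generalizedConv f log x - generalizedConv f 1 x * log b ≤ generalizedConv f log (x / b) := by
  have log_split {n : ℕ} (hn : n ∈ Ioc 0 ⌊x⌋₊) : log (x / b / n) = log (x / n) - log b := by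
    rw [div_right_comm, log_div (by linarith [one_le_div_of_mem_Ioc_floor hn]) (by positivity)]
  calc generalizedConv f log x - generalizedConv f 1 x * log b
      = ∑ n ∈ Ioc 0 ⌊x⌋₊, f n * log (x / b / n) := by
        rw [generalizedConv, generalizedConv, sum_mul, ← sum_sub_distrib]
        refine sum_congr rfl fun n hn ↦ ?_
        rw [log_split hn, Pi.one_apply]
        ring
    _ ≤ generalizedConv f log (x / b) := by
        rw [generalizedConv, ← sum_sdiff (Ioc_floor_div_subset hx hb)]
        refine add_le_of_nonpos_left (sum_nonpos fun n hn ↦ ?_)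
        simp only [mem_sdiff, mem_Ioc, not_and, not_le] at hn
        have hn0 : (0 : ℝ) < n := mod_cast hn.1.1
        have : x / b < n := Nat.lt_of_floor_lt (hn.2 hn.1.1)
        exact mul_nonpos_of_nonneg_of_nonpos (hf n)
          (log_nonpos (by positivity) ((div_le_one hn0).mpr this.le))

end GeneralizedConvolutionLog

lemma generalizedConv_pmul_log_one (f : ArithmeticFunction ℝ) (x : ℝ) :
    generalizedConv (ArithmeticFunction.log.pmul f) 1 x =
      generalizedConv f 1 x * log x - generalizedConv f log x := by
  simp only [generalizedConv]
  rw [sum_mul, ← sum_sub_distrib]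
  refine sum_congr rfl fun n hn ↦ ?_
  obtain ⟨hn0, hnx⟩ := mem_Ioc.mp hn
  have hx : x ≠ 0 := fun h ↦ by simp [h] at hnx; lia
  rw [ArithmeticFunction.pmul_apply, ArithmeticFunction.log_apply,
    log_div hx (by exact_mod_cast hn0.ne'), Pi.one_apply]
  ring

lemma log_sub_log_two_le_log_floor {y : ℝ} (hy : 1 ≤ y) : log y - log 2 ≤ log ⌊y⌋₊ := by
  have one_le : (1 : ℝ) ≤ ⌊y⌋₊ := mod_cast (Nat.one_le_floor_iff y).mpr hy
  rw [sub_le_iff_le_add, ← log_mul (by positivity) two_ne_zero]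
  exact log_le_log (by positivity) (by linarith [Nat.lt_floor_add_one y])

lemma log_log_three_mul_pos {x : ℝ} (hx : 1 ≤ x) : 0 < log (log (3 * x)) :=
  log_pos (one_lt_log_three.trans_le (log_le_log (by norm_num) (by linarith)))

lemma log_log_three_le_log_log_three_mul {x : ℝ} (hx : 1 ≤ x) :
    log (log 3) ≤ log (log (3 * x)) :=
  log_le_log (log_pos (by norm_num)) (log_le_log three_pos (by linarith))

namespace SieveDensity

open ArithmeticFunction (vonMangoldt)

variable {g : ℕ} (S : SieveDensity g)

/-- The error in the lower Mertens estimate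
`g log y - mertensError ≤ ∑_{p ≤ y} ρ(p) log p / p`. -/
noncomputable def mertensError : ℝ :=
  g * (log 2 + 1 + 2 * sumLogDivSq + primeFactorLogSum S.E)

lemma log_sub_mertensError_le_sum {y : ℝ} (hy : 1 ≤ y) :
    g * log y - S.mertensError ≤ ∑ p ∈ Nat.primesLE ⌊y⌋₊, log p * S.density p := by
  set N := ⌊y⌋₊
  have generic_le : g * ∑ p ∈ Nat.primesLE N, log p / p ≤
      ∑ p ∈ Nat.primesLE N, log p * S.density p +
        g * ∑ p ∈ Nat.primesLE N with p ∣ S.E, log p / p := by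
    rw [sum_filter, mul_sum, mul_sum, ← sum_add_distrib]
    refine sum_le_sum fun p hp ↦ ?_
    have hp := (Nat.mem_primesLE.mp hp).2
    split_ifs with h
    · exact le_add_of_nonneg_left (mul_nonneg (log_natCast_nonneg p) (S.density_nonneg p))
    · rw [S.density_prime hp, S.ρ_eq hp h]
      apply le_of_eq
      ring
  have exceptional_le := mul_le_mul_of_nonneg_left (S.sum_primesLE_log_div_of_dvd_le N)
    (Nat.cast_nonneg g)
  have mertens := mul_le_mul_of_nonneg_left
    (log_sub_le_sum_primesLE_log_div ((Nat.one_le_floor_iff y).mpr hy)) (Nat.cast_nonneg g)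
  have floor_le := mul_le_mul_of_nonneg_left (log_sub_log_two_le_log_floor hy) (Nat.cast_nonneg g)
  rw [mertensError]
  linarith

lemma log_sub_mertensError_le_generalizedConv {y : ℝ} (hy : 1 ≤ y) :
    g * log y - S.mertensError ≤ generalizedConv (vonMangoldt.pmul S.density) 1 y := by
  have term_nonneg (n : ℕ) : 0 ≤ vonMangoldt.pmul S.density n * 1 :=
    mul_nonneg (mul_nonneg ArithmeticFunction.vonMangoldt_nonneg (S.density_nonneg n)) zero_le_one
  calc g * log y - S.mertensError
      ≤ ∑ p ∈ Nat.primesLE ⌊y⌋₊, log p * S.density p := S.log_sub_mertensError_le_sum hy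
    _ = ∑ p ∈ Nat.primesLE ⌊y⌋₊, vonMangoldt.pmul S.density p * 1 := by
        refine sum_congr rfl fun p hp ↦ ?_
        rw [ArithmeticFunction.pmul_apply, mul_one,
          ArithmeticFunction.vonMangoldt_apply_prime (Nat.mem_primesLE.mp hp).2]
    _ ≤ generalizedConv (vonMangoldt.pmul S.density) 1 y := by
        refine sum_le_sum_of_subset_of_nonneg (fun p hp ↦ ?_) fun n _ _ ↦ term_nonneg n
        obtain ⟨hpy, hp⟩ := Nat.mem_primesLE.mp hp
        exact mem_Ioc.mpr ⟨hp.pos, hpy⟩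

lemma density_mul_pmul_vonMangoldt :
    S.density * vonMangoldt.pmul S.density = ArithmeticFunction.log.pmul S.density := by
  have := pmul_mul_pmul_of_map_mul S.density_mul (ArithmeticFunction.zeta : ArithmeticFunction ℝ)
    vonMangoldt
  rwa [ArithmeticFunction.zeta_pmul, ArithmeticFunction.zeta_mul_vonMangoldt] at this

lemma add_one_mul_generalizedConv_log_le (x : ℝ) :
    (g + 1) * generalizedConv S.density log x ≤
      generalizedConv S.density 1 x * (log x + S.mertensError) := by
  have mertens : generalizedConv S.density (fun y ↦ g * log y - S.mertensError) x ≤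
      generalizedConv S.density 1 x * log x - generalizedConv S.density log x := by
    rw [← generalizedConv_pmul_log_one, ← density_mul_pmul_vonMangoldt, generalizedConv_mul]
    exact generalizedConv_mono S.density_nonneg x fun n hn ↦
      S.log_sub_mertensError_le_generalizedConv (one_le_div_of_mem_Ioc_floor hn)
  have expand : generalizedConv S.density (fun y ↦ g * log y - S.mertensError) x =
      g * generalizedConv S.density log x - generalizedConv S.density 1 x * S.mertensError := by
    simp only [generalizedConv]
    rw [mul_sum, sum_mul, ← sum_sub_distrib]
    exact sum_congr rfl fun n _ ↦ by rw [Pi.one_apply]; ring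
  linarith

lemma hasSum_singular_mul_generalizedConv_log {x : ℝ} :
    HasSum (fun b : ℕ ↦ S.singular b * generalizedConv S.density log (x / b))
      (generalizedConv (reciprocal ^ g) log x) := by
  rw [← S.singular_mul_density, generalizedConv_mul]
  refine hasSum_sum_of_ne_finset_zero fun b hb ↦ ?_
  obtain rfl | hb0 := Nat.eq_zero_or_pos b
  · simp
  · have : ⌊x⌋₊ < b := by simpa [hb0] using hb
    simp [generalizedConv, Nat.floor_div_natCast, Nat.div_eq_of_lt this]

lemma singular_mul_generalizedConv_sub_le {x : ℝ} (hx : 0 ≤ x) (b : ℕ) :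
    S.singular b * (generalizedConv S.density log (x / b) - generalizedConv S.density log x) ≤
      |S.singular b| * log b * generalizedConv S.density 1 x := by
  obtain rfl | hb := Nat.eq_zero_or_pos b
  · simp
  have hb1 : (1 : ℝ) ≤ b := mod_cast hb
  have upper := generalizedConv_log_div_le S.density_nonneg hx hb1
  have lower := generalizedConv_log_sub_le S.density_nonneg hx hb1
  rw [mul_assoc]
  refine (le_abs_self _).trans ?_
  rw [abs_mul, abs_of_nonpos (sub_nonpos.mpr upper)]
  gcongr
  linarith

lemma generalizedConv_reciprocal_pow_log_le {x : ℝ} (hx : 0 ≤ x) :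
    generalizedConv (reciprocal ^ g) log x ≤
      S.singularSeries * generalizedConv S.density log x +
        (∑' n, |S.singular n|) * S.logMoment * generalizedConv S.density 1 x := by
  set T := generalizedConv S.density log
  set F := generalizedConv S.density 1 x
  have singular_hasSum : HasSum (fun b ↦ S.singular b) S.singularSeries :=
    S.summable_abs_singular.of_abs.hasSum
  have diff_hasSum : HasSum (fun b : ℕ ↦ S.singular b * (T (x / b) - T x))
      (generalizedConv (reciprocal ^ g) log x - S.singularSeries * T x) := by
    simp_rw [mul_sub]
    exact S.hasSum_singular_mul_generalizedConv_log.sub (singular_hasSum.mul_right (T x))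
  rw [← sub_le_iff_le_add']
  refine le_of_tendsto' diff_hasSum.tendsto_sum_nat fun M ↦ ?_
  calc ∑ b ∈ range M, S.singular b * (T (x / b) - T x)
      ≤ ∑ b ∈ range M, |S.singular b| * log b * F :=
        sum_le_sum fun b _ ↦ S.singular_mul_generalizedConv_sub_le hx b
    _ ≤ ∑ b ∈ insert 0 (Ioc 0 M), |S.singular b| * log b * F := by
        refine sum_le_sum_of_subset_of_nonneg (fun b hb ↦ ?_) fun b _ _ ↦ ?_
        · have := mem_range.mp hb
          rw [mem_insert, mem_Ioc]
          lia
        · have := generalizedConv_one_nonneg S.density_nonneg (x := x)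
          have := log_natCast_nonneg b
          positivity
    _ = (∑ b ∈ Ioc 0 M, |S.singular b| * log b) * F := by
        rw [sum_insert (by simp), Nat.cast_zero, log_zero, mul_zero, zero_mul, zero_add, sum_mul]
    _ ≤ (∑' n, |S.singular n|) * S.logMoment * F :=
        mul_le_mul_of_nonneg_right (S.sum_abs_singular_mul_log_le M)
          (generalizedConv_one_nonneg S.density_nonneg)

lemma log_pow_div_factorial_le_singularSeries_mul {x : ℝ} (hx : 1 ≤ x) :
    log x ^ (g + 1) / g.factorial ≤ S.singularSeries * generalizedConv S.density 1 x *
      (log x + S.mertensError + (g + 1) * (exp (ratioConst g * (π ^ 2 / 6)) * S.logMoment)) := by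
  have hF := generalizedConv_one_nonneg S.density_nonneg (x := x)
  have hT := S.add_one_mul_generalizedConv_log_le x
  set F := generalizedConv S.density 1 x
  set T := generalizedConv S.density log x
  set K := S.singularSeries
  set G := exp (ratioConst g * (π ^ 2 / 6))
  have hK : 0 < K := S.singularSeries_pos
  have := S.logMoment_nonneg
  calc log x ^ (g + 1) / g.factorial
      = (g + 1) * (log x ^ (g + 1) / (g + 1).factorial) := by
        rw [Nat.factorial_succ, Nat.cast_mul, Nat.cast_succ]
        field_simp
    _ ≤ (g + 1) * (K * T + (∑' n, |S.singular n|) * S.logMoment * F) := by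
        gcongr
        exact (log_pow_div_factorial_le_generalizedConv g hx).trans
          (S.generalizedConv_reciprocal_pow_log_le (by linarith))
    _ ≤ (g + 1) * (K * T + K * G * S.logMoment * F) := by
        gcongr
        exact S.tsum_abs_singular_le
    _ = K * ((g + 1) * T) + K * F * ((g + 1) * (G * S.logMoment)) := by ring
    _ ≤ K * (F * (log x + S.mertensError)) + K * F * ((g + 1) * (G * S.logMoment)) := by gcongr
    _ = K * F * (log x + S.mertensError + (g + 1) * (G * S.logMoment)) := by ring

theorem exists_log_pow_div_factorial_le (g : ℕ) :
    ∃ C : ℝ, 0 < C ∧ ∀ (S : SieveDensity g) {x : ℝ}, 1 ≤ x →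
      log x ^ (g + 1) / g.factorial ≤ S.singularSeries * generalizedConv S.density 1 x *
        (log x + C * (1 + log (log (3 * S.E)))) := by
  set G := exp (ratioConst g * (π ^ 2 / 6))
  set K₁ := g * (log 2 + 1 + 2 * sumLogDivSq + (log 4 + 1)) +
    (g + 1) * (G * (g * (log 4 + 1) + tailConst g * sumLogDivSq)) with hK₁
  set K₂ := g + (g + 1) * (G * g) with hK₂
  have := sumLogDivSq_nonneg
  have := tailConst_nonneg g
  have hK₁0 : 0 ≤ K₁ := by positivity
  have : 0 ≤ K₂ := by positivity
  refine ⟨K₁ + K₂ + 1, by positivity, fun S x hx ↦ ?_⟩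
  have hE : (1 : ℝ) ≤ S.E := mod_cast S.one_le_E
  have exceptional_le := primeFactorLogSum_le S.one_le_E
  have hL := log_log_three_mul_pos hE
  set L := log (log (3 * S.E))
  have error_le : S.mertensError + (g + 1) * (G * S.logMoment) ≤ K₁ + K₂ * L :=
    calc S.mertensError + (g + 1) * (G * S.logMoment)
        ≤ g * (log 2 + 1 + 2 * sumLogDivSq + (L + (log 4 + 1))) +
            (g + 1) * (G * (g * (L + (log 4 + 1)) + tailConst g * sumLogDivSq)) := by
          rw [mertensError, logMoment]
          gcongr
      _ = K₁ + K₂ * L := by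
          rw [hK₁, hK₂]
          ring
  have := S.singularSeries_pos
  have := generalizedConv_one_nonneg S.density_nonneg (x := x)
  refine (S.log_pow_div_factorial_le_singularSeries_mul hx).trans
    (mul_le_mul_of_nonneg_left ?_ (by positivity))
  linarith [mul_nonneg hK₁0 hL.le]

end SieveDensity

section SelbergSumLowerBound

open UniqueFactorizationMonoid (radical radical_dvd_self squarefree_radical)

variable {f : ℕ →* ℝ} (hf : ∀ n, 0 ≤ f n) (hlt : ∀ {p : ℕ}, p.Prime → f p < 1)

include hf hlt

lemma sum_le_prod_primeFactors_of_radical_eq {A : Finset ℕ} {l : ℕ}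
    (hA : ∀ n ∈ A, n ≠ 0 ∧ radical n = l) :
    ∑ n ∈ A, f n ≤ f l * ∏ p ∈ l.primeFactors, (1 - f p)⁻¹ := by
  have euler : HasSum ((Nat.factoredNumbers l.primeFactors).indicator f)
      (∏ p ∈ l.primeFactors, (1 - f p)⁻¹) := by
    have := (EulerProduct.summable_and_hasSum_factoredNumbers_prod_filter_prime_geometric (f := f)
      (fun hp ↦ by simpa [abs_of_nonneg (hf _)] using hlt hp) l.primeFactors).2
    rw [filter_true_of_mem fun p hp ↦ Nat.prime_of_mem_primeFactors hp] at this
    exact hasSum_subtype_iff_indicator.mp this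
  have l_dvd {n : ℕ} (hn : n ∈ A) : l ∣ n := (hA n hn).2 ▸ radical_dvd_self
  have div_mem {n : ℕ} (hn : n ∈ A) : n / l ∈ Nat.factoredNumbers l.primeFactors := by
    obtain ⟨hn0, hnl⟩ := hA n hn
    refine Nat.mem_factoredNumbers_iff_primeFactors_subset.mpr
      ⟨(Nat.div_ne_zero_iff_of_dvd (l_dvd hn)).mpr ⟨hn0, ne_zero_of_dvd_ne_zero hn0 (l_dvd hn)⟩, ?_⟩
    rw [← hnl, Nat.primeFactors_radical, hnl]
    exact Nat.primeFactors_mono (Nat.div_dvd_of_dvd (l_dvd hn)) hn0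
  have div_injOn : Set.InjOn (· / l) A := fun m hm n hn hmn ↦ by
    rw [← Nat.div_mul_cancel (l_dvd hm), ← Nat.div_mul_cancel (l_dvd hn)]
    exact congrArg (· * l) hmn
  calc ∑ n ∈ A, f n
      = f l * ∑ m ∈ A.image (· / l), (Nat.factoredNumbers l.primeFactors).indicator f m := by
        rw [sum_image div_injOn, mul_sum]
        refine sum_congr rfl fun n hn ↦ ?_
        rw [Set.indicator_of_mem (div_mem hn), ← map_mul, Nat.mul_div_cancel' (l_dvd hn)]
    _ ≤ f l * ∏ p ∈ l.primeFactors, (1 - f p)⁻¹ :=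
        mul_le_mul_of_nonneg_left
          (sum_le_hasSum _ (fun n _ ↦ Set.indicator_nonneg (fun m _ ↦ hf m) n) euler) (hf l)

lemma sum_Ioc_le_selbergSum {s : BoundingSieve} {D : ℕ}
    (hdvd : ∀ {p : ℕ}, p.Prime → p ≤ D → f p ≠ 0 → p ∣ s.prodPrimes)
    (hnu : ∀ {p : ℕ}, p.Prime → s.nu p = f p) : ∑ n ∈ Ioc 0 D, f n ≤ selbergSum s D := by
  have radical_mem : ∀ n ∈ {n ∈ Ioc 0 D | f n ≠ 0},
      radical n ∈ {l ∈ s.prodPrimes.divisors | l ≤ D} := fun n hn ↦ by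
    obtain ⟨⟨hn0, hnD⟩, hfn⟩ : (0 < n ∧ n ≤ D) ∧ f n ≠ 0 := by simpa using hn
    refine mem_filter.mpr ⟨Nat.mem_divisors.mpr ⟨?_, s.prodPrimes_ne_zero⟩,
      (Nat.radical_le_self_iff.mpr hn0.ne').trans hnD⟩
    rw [Nat.radical_eq_prod_primeFactors]
    refine prod_primes_dvd _ (fun p hp ↦ (Nat.prime_of_mem_primeFactors hp).prime) fun p hp ↦ ?_
    have hpn := Nat.dvd_of_mem_primeFactors hp
    refine hdvd (Nat.prime_of_mem_primeFactors hp) ((Nat.le_of_dvd hn0 hpn).trans hnD) fun hfp ↦ ?_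
    obtain ⟨m, rfl⟩ := hpn
    exact hfn (by rw [map_mul, hfp, zero_mul])
  have selbergTerms_eq {l : ℕ} (hl : l ∣ s.prodPrimes) :
      s.selbergTerms l = f l * ∏ p ∈ l.primeFactors, (1 - f p)⁻¹ := by
    have nu_prime {p : ℕ} (hp : p ∈ l.primeFactors) : s.nu p = f p :=
      hnu (Nat.prime_of_mem_primeFactors hp)
    rw [BoundingSieve.selbergTerms_apply, ← BoundingSieve.prod_primeFactors_nu hl,
      prod_congr rfl fun p hp ↦ nu_prime hp, ← map_prod,
      Nat.prod_primeFactors_of_squarefree (s.prodPrimes_squarefree.squarefree_of_dvd hl),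
      prod_congr rfl fun p hp ↦ by rw [nu_prime hp]]
  rw [selbergSum, ← sum_filter_ne_zero, ← sum_fiberwise_of_maps_to radical_mem]
  refine sum_le_sum fun l hl ↦ ?_
  rw [selbergTerms_eq (Nat.dvd_of_mem_divisors (mem_filter.mp hl).1)]
  refine sum_le_prod_primeFactors_of_radical_eq hf hlt fun n hn ↦ ?_
  simp only [mem_filter, mem_Ioc] at hn
  exact ⟨hn.1.1.1.ne', hn.2⟩

end SelbergSumLowerBound

section PolynomialSieve

open Polynomial

variable (f : ℤ[X])

/-- The arithmetic function `d ↦ ρ(d) / d`, where `ρ(d)` is the number of roots of `f` modulo `d`: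
the density of the integers `n` with `d ∣ f n`. -/
noncomputable def residueRootDensity : ArithmeticFunction ℝ :=
  ⟨fun d ↦ residueRootCount f d / d, by simp⟩

lemma residueRootDensity_apply (d : ℕ) : residueRootDensity f d = residueRootCount f d / d := rfl

lemma isMultiplicative_residueRootDensity : (residueRootDensity f).IsMultiplicative :=
  ⟨by simp [residueRootDensity_apply, residueRootCount_one], fun {m n} h ↦ by
    simp_rw [residueRootDensity_apply, residueRootCount_mul_of_coprime f h, Nat.cast_mul]
    rw [mul_div_mul_comm]⟩

lemma residueRootCount_eq_mul_residueRootDensity {d : ℕ} (hd : d ≠ 0) :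
    (residueRootCount f d : ℝ) = d * residueRootDensity f d := by
  rw [residueRootDensity_apply, mul_div_cancel₀ _ (Nat.cast_ne_zero.mpr hd)]

lemma residueRootCount_lcm_mul_gcd {d e : ℕ} (hd : d ≠ 0) (he : e ≠ 0) :
    residueRootCount f (d.lcm e) * residueRootCount f (d.gcd e) =
      residueRootCount f d * residueRootCount f e := by
  have density_eq :=
    (isMultiplicative_residueRootDensity f).lcm_apply_mul_gcd_apply (x := d) (y := e)
  have mul_eq : (d.lcm e : ℝ) * d.gcd e = d * e := mod_cast (d.gcd_mul_lcm e ▸ mul_comm _ _)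
  rw [← Nat.cast_inj (R := ℝ), Nat.cast_mul, Nat.cast_mul,
    residueRootCount_eq_mul_residueRootDensity f (Nat.lcm_ne_zero hd he),
    residueRootCount_eq_mul_residueRootDensity f (Nat.gcd_ne_zero_left hd),
    residueRootCount_eq_mul_residueRootDensity f hd,
    residueRootCount_eq_mul_residueRootDensity f he]
  linear_combination (d.lcm e : ℝ) * d.gcd e * density_eq +
    residueRootDensity f d * residueRootDensity f e * mul_eq

lemma residueRootCount_le_mul_reciprocal_pow {g d : ℕ} (hd : Squarefree d)
    (h : ∀ p ∈ d.primeFactors, residueRootCount f p ≤ g) :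
    (residueRootCount f d : ℝ) ≤ d * (reciprocal ^ g) d := by
  rw [residueRootCount_eq_mul_residueRootDensity f hd.ne_zero,
    ← (isMultiplicative_residueRootDensity f).prod_primeFactors hd,
    ← (isMultiplicative_reciprocal_pow g).prod_primeFactors hd]
  gcongr with p hp
  · exact fun p _ ↦ by rw [residueRootDensity_apply]; positivity
  · rw [residueRootDensity_apply, reciprocal_pow_prime g (Nat.prime_of_mem_primeFactors hp)]
    gcongr
    exact h p hp

/-- The product of the primes up to `D` modulo which `f` has a root. Primes without a root never
divide a value of `f`; leaving them out makes the sieve density positive on all sifting primes. -/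
noncomputable def siftingPrimesProd (D : ℕ) : ℕ :=
  ∏ p ∈ Nat.primesLE D with residueRootCount f p ≠ 0, p

lemma dvd_siftingPrimesProd_iff {D p : ℕ} (hp : p.Prime) :
    p ∣ siftingPrimesProd f D ↔ p ≤ D ∧ residueRootCount f p ≠ 0 := by
  rw [siftingPrimesProd, hp.prime.dvd_finsetProd_iff]
  constructor
  · rintro ⟨q, hq, hpq⟩
    rw [mem_filter, Nat.mem_primesLE] at hq
    rw [(Nat.prime_dvd_prime_iff_eq hp hq.1.2).mp hpq]
    exact ⟨hq.1.1, hq.2⟩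
  · rintro ⟨hpD, hroot⟩
    exact ⟨p, mem_filter.mpr ⟨Nat.mem_primesLE.mpr ⟨hpD, hp⟩, hroot⟩, dvd_rfl⟩

lemma squarefree_siftingPrimesProd (D : ℕ) : Squarefree (siftingPrimesProd f D) := by
  have prime_of_mem {p : ℕ} (hp : p ∈ {p ∈ Nat.primesLE D | residueRootCount f p ≠ 0}) : p.Prime :=
    (Nat.mem_primesLE.mp (mem_filter.mp hp).1).2
  refine squarefree_prod_of_pairwise_isCoprime (fun p hp q hq hpq ↦ ?_)
    fun p hp ↦ (prime_of_mem hp).prime.squarefree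
  exact Nat.coprime_iff_isRelPrime.mp
    ((Nat.coprime_primes (prime_of_mem hp) (prime_of_mem hq)).mpr hpq)

lemma sum_image_ite_card_fiber {α β : Type*} (s : Finset α) (V : α → β) (q : β → Prop)
    [DecidablePred q] :
    ∑ m ∈ s.image V, (if q m then (#{n ∈ s | V n = m} : ℝ) else 0) = #{n ∈ s | q (V n)} := by
  rw [card_filter, Nat.cast_sum, sum_comp (fun m ↦ ((if q m then 1 else 0 : ℕ) : ℝ)) V]
  exact sum_congr rfl fun m _ ↦ by split_ifs <;> simp

variable {f} (hf : ∀ {p : ℕ}, p.Prime → residueRootCount f p < p)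

/-- The problem of sifting the values `f n` with `x < n ≤ z` by the primes up to `D`. Values of `f`
enter through their absolute value, weighted by the number of `n` at which they are taken. -/
noncomputable def polynomialSieve (x z : ℝ) (D : ℕ) : BoundingSieve where
  support := (Ioc ⌊x⌋ ⌊z⌋).image fun n ↦ (f.eval n).natAbs
  prodPrimes := siftingPrimesProd f D
  prodPrimes_squarefree := squarefree_siftingPrimesProd f D
  weights m := #{n ∈ Ioc ⌊x⌋ ⌊z⌋ | (f.eval n).natAbs = m}
  weights_nonneg _ := Nat.cast_nonneg _
  totalMass := z - x
  nu := residueRootDensity f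
  nu_mult := isMultiplicative_residueRootDensity f
  nu_pos_of_prime _ hp h := div_pos
    (Nat.cast_pos.mpr (Nat.pos_of_ne_zero ((dvd_siftingPrimesProd_iff f hp).mp h).2))
    (Nat.cast_pos.mpr hp.pos)
  nu_lt_one_of_prime _ hp _ :=
    (div_lt_one (Nat.cast_pos.mpr hp.pos)).mpr (Nat.cast_lt.mpr (hf hp))

lemma siftedSum_polynomialSieve (x z : ℝ) (D : ℕ) : (polynomialSieve hf x z D).siftedSum =
    #{n ∈ Ioc ⌊x⌋ ⌊z⌋ | (siftingPrimesProd f D).Coprime (f.eval n).natAbs} := by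
  simp only [BoundingSieve.siftedSum, polynomialSieve]
  convert sum_image_ite_card_fiber _ _ (siftingPrimesProd f D).Coprime using 3
  congr

lemma abs_rem_polynomialSieve_le {x z : ℝ} (h : x ≤ z) (D : ℕ) {d : ℕ} (hd : 0 < d) :
    |(polynomialSieve hf x z D).rem d| ≤ residueRootCount f d := by
  convert abs_card_Ioc_filter_dvd_eval_sub_le f h hd
  simp only [BoundingSieve.rem, BoundingSieve.multSum, polynomialSieve, residueRootDensity_apply,
    Int.natCast_dvd]
  congr 1
  convert sum_image_ite_card_fiber _ _ (d ∣ ·)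

include hf in
lemma residueRootCount_lcm_le (D : ℕ) {d e : ℕ} (hd : d ∣ siftingPrimesProd f D)
    (he : e ∣ siftingPrimesProd f D) :
    residueRootCount f (d.lcm e) ≤ residueRootCount f d * residueRootCount f e := by
  have hP := (squarefree_siftingPrimesProd f D).ne_zero
  have gcd_dvd : d.gcd e ∣ (polynomialSieve hf 0 0 D).prodPrimes := (Nat.gcd_dvd_left d e).trans hd
  have gcd_pos : residueRootCount f (d.gcd e) ≠ 0 := fun h0 ↦
    BoundingSieve.nu_ne_zero gcd_dvd (by simp [polynomialSieve, residueRootDensity_apply, h0])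
  rw [← residueRootCount_lcm_mul_gcd f (ne_zero_of_dvd_ne_zero hP hd)
    (ne_zero_of_dvd_ne_zero hP he)]
  exact Nat.le_mul_of_pos_right _ (Nat.pos_of_ne_zero gcd_pos)

lemma sum_residueRootCount_le {g : ℕ} (hg : ∀ {p : ℕ}, p.Prime → residueRootCount f p ≤ g) (D : ℕ) :
    ∑ d ∈ (siftingPrimesProd f D).divisors with d ≤ D, (residueRootCount f d : ℝ) ≤
      D * (1 + log D) ^ g := by
  have hP := squarefree_siftingPrimesProd f D
  calc ∑ d ∈ (siftingPrimesProd f D).divisors with d ≤ D, (residueRootCount f d : ℝ)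
      ≤ ∑ d ∈ (siftingPrimesProd f D).divisors with d ≤ D, D * (reciprocal ^ g) d := by
        refine sum_le_sum fun d hd ↦ ?_
        obtain ⟨hd, hdD⟩ := mem_filter.mp hd
        refine (residueRootCount_le_mul_reciprocal_pow f
          (hP.squarefree_of_dvd (Nat.dvd_of_mem_divisors hd))
          fun p hp ↦ hg (Nat.prime_of_mem_primeFactors hp)).trans ?_
        have := reciprocal_pow_nonneg g d
        gcongr
    _ ≤ ∑ d ∈ Ioc 0 D, D * (reciprocal ^ g) d := by
        refine sum_le_sum_of_subset_of_nonneg (fun d hd ↦ ?_) fun d _ _ ↦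
          mul_nonneg (Nat.cast_nonneg D) (reciprocal_pow_nonneg g d)
        obtain ⟨hd, hdD⟩ := mem_filter.mp hd
        exact mem_Ioc.mpr ⟨Nat.pos_of_mem_divisors hd, hdD⟩
    _ ≤ D * (1 + log D) ^ g := by
        rw [← mul_sum]
        exact mul_le_mul_of_nonneg_left (sum_reciprocal_pow_le g D) (Nat.cast_nonneg D)

lemma SieveDensity.one_le_generalizedConv_density {g : ℕ} (S : SieveDensity g) {x : ℝ}
    (hx : 1 ≤ x) : 1 ≤ generalizedConv S.density 1 x := by
  have one_mem : 1 ∈ Ioc 0 ⌊x⌋₊ := mem_Ioc.mpr ⟨one_pos, (Nat.one_le_floor_iff x).mpr hx⟩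
  simpa [generalizedConv, S.density_one] using single_le_sum
    (f := fun n ↦ S.density n * (1 : ℝ → ℝ) (x / n))
    (fun n _ ↦ mul_nonneg (S.density_nonneg n) zero_le_one) one_mem

theorem card_filter_coprime_eval_le {g : ℕ} (S : SieveDensity g) (hS : S.ρ = residueRootCount f)
    {x z : ℝ} (h : x ≤ z) {D : ℕ} (hD : 1 ≤ D) :
    (#{n ∈ Ioc ⌊x⌋ ⌊z⌋ | (siftingPrimesProd f D).Coprime (f.eval n).natAbs} : ℝ) ≤
      (z - x) / generalizedConv S.density 1 D + (D * (1 + log D) ^ g) ^ 2 := by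
  have hf {p : ℕ} (hp : p.Prime) : residueRootCount f p < p := hS ▸ S.ρ_lt hp
  have hP := (squarefree_siftingPrimesProd f D).ne_zero
  have density_prime {p : ℕ} (hp : p.Prime) : S.density p = residueRootDensity f p := by
    rw [S.density_prime hp, hS, residueRootDensity_apply]
  have conv_le : generalizedConv S.density 1 D ≤ selbergSum (polynomialSieve hf x z D) D := by
    have := sum_Ioc_le_selbergSum (f := ⟨⟨S.density, S.density_one⟩, S.density_mul⟩)
      (s := polynomialSieve hf x z D) (D := D) S.density_nonneg
      (fun hp ↦ by
        simpa [density_prime hp, residueRootDensity_apply] using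
          (div_lt_one (Nat.cast_pos.mpr hp.pos)).mpr (Nat.cast_lt.mpr (hf hp)))
      (fun hp hpD h0 ↦ (dvd_siftingPrimesProd_iff f hp).mpr ⟨hpD, fun hroot ↦
        h0 (by simp [density_prime hp, residueRootDensity_apply, hroot])⟩)
      (fun hp ↦ (density_prime hp).symm)
    simpa [generalizedConv] using this
  have conv_pos := zero_lt_one.trans_le (S.one_le_generalizedConv_density (Nat.one_le_cast.mpr hD))
  calc (#{n ∈ Ioc ⌊x⌋ ⌊z⌋ | (siftingPrimesProd f D).Coprime (f.eval n).natAbs} : ℝ)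
      ≤ (z - x) / selbergSum (polynomialSieve hf x z D) D +
        (∑ d ∈ (siftingPrimesProd f D).divisors with d ≤ D, (residueRootCount f d : ℝ)) ^ 2 := by
        rw [← siftedSum_polynomialSieve hf]
        exact siftedSum_le_div_selbergSum_add_sq (s := polynomialSieve hf x z D) hD
          (fun d hd ↦ abs_rem_polynomialSieve_le hf h D
            (Nat.pos_of_ne_zero (ne_zero_of_dvd_ne_zero hP hd)))
          (fun d e hd he ↦ mod_cast residueRootCount_lcm_le hf D hd he)
    _ ≤ (z - x) / generalizedConv S.density 1 D + (D * (1 + log D) ^ g) ^ 2 := by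
        gcongr
        exact sum_residueRootCount_le (fun hp ↦ hS ▸ S.ρ_le hp) D

end PolynomialSieve

section PrimeValues

lemma card_filter_forall_prime_le {ι : Type*} [Fintype ι] {a : ι → ℤ} (ha : ∀ i, a i ≠ 0)
    (b : ι → ℤ) [DecidablePred fun n ↦ ∀ i, Prime (a i * n + b i)] (I : Finset ℤ) {P D : ℕ}
    (hP : ∀ {p : ℕ}, p.Prime → p ∣ P → p ≤ D) :
    #{n ∈ I | ∀ i, Prime (a i * n + b i)} ≤
      #{n ∈ I | P.Coprime ((linearProduct a b).eval n).natAbs} +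
        Fintype.card ι * (2 * D + 1) := by
  let small (i : ι) : Finset ℤ := {n ∈ I | a i * n + b i ∈ Icc (-(D : ℤ)) D}
  have card_small_le (i : ι) : #(small i) ≤ 2 * D + 1 :=
    calc #(small i) ≤ #(Icc (-(D : ℤ)) D) :=
          card_le_card_of_injOn (fun n ↦ a i * n + b i) (fun n hn ↦ (mem_filter.mp hn).2)
            fun m _ n _ hmn ↦ mul_left_cancel₀ (ha i) (add_right_cancel hmn)
      _ = 2 * D + 1 := by rw [Int.card_Icc]; lia
  have subset_union : {n ∈ I | ∀ i, Prime (a i * n + b i)} ⊆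
      {n ∈ I | P.Coprime ((linearProduct a b).eval n).natAbs} ∪ univ.biUnion small := by
    intro n hn
    obtain ⟨hnI, hprime⟩ := mem_filter.mp hn
    by_contra hnot
    simp only [mem_union, mem_biUnion, mem_univ, true_and, not_or, not_exists, small, mem_filter,
      hnI] at hnot
    refine hnot.1 (Nat.coprime_of_dvd fun p hp hpP hpV ↦ ?_)
    rw [← Int.natCast_dvd, eval_linearProduct,
      (Nat.prime_iff_prime_int.mp hp).dvd_finsetProd_iff] at hpV
    obtain ⟨i, -, hi⟩ := hpV
    have p_eq : p = (a i * n + b i).natAbs :=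
      (Nat.prime_dvd_prime_iff_eq hp (Int.prime_iff_natAbs_prime.mp (hprime i))).mp
        (Int.natCast_dvd.mp hi)
    have := hP hp hpP
    exact hnot.2 i (mem_Icc.mpr (by lia))
  calc #{n ∈ I | ∀ i, Prime (a i * n + b i)}
      ≤ #{n ∈ I | P.Coprime ((linearProduct a b).eval n).natAbs} + #(univ.biUnion small) :=
        (card_le_card subset_union).trans (card_union_le _ _)
    _ ≤ #{n ∈ I | P.Coprime ((linearProduct a b).eval n).natAbs} +
        Fintype.card ι * (2 * D + 1) :=
        Nat.add_le_add_left
          (card_biUnion_le_card_mul _ _ _ fun i _ ↦ card_small_le i) _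

lemma natCard_setOf_floor {Q : ℤ → Prop} [DecidablePred Q] (x z : ℝ) :
    Nat.card {n : ℤ | x < (n : ℝ) ∧ (n : ℝ) ≤ z ∧ Q n} = #{n ∈ Ioc ⌊x⌋ ⌊z⌋ | Q n} := by
  rw [← Nat.card_eq_finsetCard]
  exact Nat.card_congr (Equiv.subtypeEquivRight fun n ↦ by
    simp [Int.floor_lt, Int.le_floor, and_assoc])

lemma card_Ioc_floor_le {x z : ℝ} (h : x ≤ z) : (#(Ioc ⌊x⌋ ⌊z⌋) : ℝ) ≤ z - x + 1 := by
  have card_eq : (#(Ioc ⌊x⌋ ⌊z⌋) : ℝ) = ⌊z⌋ - ⌊x⌋ := by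
    rw [Int.card_Ioc, ← Int.cast_natCast, Int.toNat_of_nonneg (sub_nonneg.mpr (Int.floor_mono h)),
      Int.cast_sub]
  linarith [Int.floor_le z, Int.lt_floor_add_one x]

variable {g : ℕ} {a b : Fin g → ℤ} (hE : sieveE a b ≠ 0)
  (hρ : ∀ p : ℕ, p.Prime → sieveRho a b p < p)

/-- The sieve density of the linear forms `a i * n + b i`. -/
noncomputable def linearSieveDensity : SieveDensity g where
  ρ := sieveRho a b
  E := (sieveE a b).natAbs
  one_le_E := Int.natAbs_pos.mpr hE
  ρ_le hp := sieveRho_le hp (hρ _ hp)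
  ρ_lt hp := hρ _ hp
  ρ_eq hp h := sieveRho_eq_of_not_dvd_sieveE hp (hρ _ hp) (mt Int.natCast_dvd.mp h)

lemma natCard_setOf_forall_prime_le {x z : ℝ} (h : x ≤ z) {D : ℕ} (hD : 1 ≤ D) :
    (Nat.card {n : ℤ | x < (n : ℝ) ∧ (n : ℝ) ≤ z ∧ ∀ i, Prime (a i * n + b i)} : ℝ) ≤
      (z - x) / generalizedConv (linearSieveDensity hE hρ).density 1 D +
        (D * (1 + log D) ^ g) ^ 2 + g * (2 * D + 1) := by
  have ha (i : Fin g) : a i ≠ 0 := fun hi ↦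
    hE (by rw [sieveE, prod_eq_zero (mem_univ i) hi, zero_mul])
  have card_le := card_filter_forall_prime_le ha b (Ioc ⌊x⌋ ⌊z⌋)
    (P := siftingPrimesProd (linearProduct a b) D)
    fun hp hpP ↦ ((dvd_siftingPrimesProd_iff _ hp).mp hpP).1
  have coprime_le := card_filter_coprime_eval_le (linearSieveDensity hE hρ)
    (sieveRho_eq_residueRootCount a b) h hD
  rw [natCard_setOf_floor]
  rw [Fintype.card_fin] at card_le
  have card_le_real : (#{n ∈ Ioc ⌊x⌋ ⌊z⌋ | ∀ i, Prime (a i * n + b i)} : ℝ) ≤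
      #{n ∈ Ioc ⌊x⌋ ⌊z⌋ | (siftingPrimesProd (linearProduct a b) D).Coprime
        ((linearProduct a b).eval n).natAbs} + g * (2 * D + 1) := mod_cast card_le
  linarith

lemma natCard_setOf_forall_prime_le_add_one {x z : ℝ} (h : x ≤ z) :
    (Nat.card {n : ℤ | x < (n : ℝ) ∧ (n : ℝ) ≤ z ∧ ∀ i, Prime (a i * n + b i)} : ℝ) ≤
      z - x + 1 := by
  rw [natCard_setOf_floor]
  exact (Nat.cast_le.mpr (card_filter_le _ _)).trans (card_Ioc_floor_le h)

lemma singularSeries_linearSieveDensity : (linearSieveDensity hE hρ).singularSeries =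
    ∏' p : Nat.Primes, ((1 - ((sieveRho a b p : ℝ) - 1) / ((p : ℕ) - 1)) *
      (1 - 1 / ((p : ℕ) : ℝ)) ^ (-(g : ℤ) + 1)) := by
  rw [← (linearSieveDensity hE hρ).hasProd_singularSeries.tprod_eq]
  refine tprod_congr fun p ↦ ?_
  have one_lt : (1 : ℝ) < (p : ℕ) := mod_cast p.2.one_lt
  have hp1 : ((p : ℕ) : ℝ) - 1 ≠ 0 := by linarith
  have hp0 : ((p : ℕ) : ℝ) ≠ 0 := by linarith
  have hq : 1 - 1 / ((p : ℕ) : ℝ) ≠ 0 := by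
    rw [one_sub_div hp0]
    exact div_ne_zero hp1 hp0
  calc ∑' j, (linearSieveDensity hE hρ).singular (p ^ j)
      = (1 - (sieveRho a b p : ℝ) / (p : ℕ)) * (1 - ((p : ℕ) : ℝ)⁻¹)⁻¹ ^ g :=
        (linearSieveDensity hE hρ).tsum_singular_prime_pow p.2
    _ = (1 - ((sieveRho a b p : ℝ) - 1) / ((p : ℕ) - 1)) * (1 - 1 / ((p : ℕ) : ℝ)) *
        (1 - 1 / ((p : ℕ) : ℝ))⁻¹ ^ g := by
        rw [one_div]
        congr 1
        field_simp
        ring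
    _ = _ := by
        rw [zpow_add₀ hq, zpow_neg, zpow_natCast, zpow_one, inv_pow]
        ring

end PrimeValues

section Asymptotics

open Filter

lemma one_add_pow_le_one_add_mul (n : ℕ) {t : ℝ} (ht0 : 0 ≤ t) (ht1 : t ≤ 1) :
    (1 + t) ^ n ≤ 1 + (2 ^ n - 1) * t := by
  induction n with
  | zero => simp
  | succ n ih =>
    have one_le : (1 : ℝ) ≤ 2 ^ n := one_le_pow₀ one_le_two
    calc (1 + t) ^ (n + 1) ≤ (1 + (2 ^ n - 1) * t) * (1 + t) := by rw [pow_succ]; gcongr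
      _ = 1 + 2 ^ n * t + (2 ^ n - 1) * t * t := by ring
      _ ≤ 1 + 2 ^ n * t + (2 ^ n - 1) * t * 1 := by
          have := sub_nonneg.mpr one_le
          gcongr
      _ = 1 + (2 ^ (n + 1) - 1) * t := by ring

lemma inv_le_two_div_mul_one_add {l L w : ℝ} (hl : 0 < l) (hw : 0 ≤ w) (hwl : 4 * w ≤ l)
    (hL : l / 2 - w ≤ L) : L⁻¹ ≤ 2 / l * (1 + 4 * w / l) := by
  have hL0 : 0 < l / 2 - w := by linarith
  calc L⁻¹ ≤ (l / 2 - w)⁻¹ := inv_anti₀ hL0 hL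
    _ ≤ 2 / l * (1 + 4 * w / l) := by
        rw [inv_le_iff_one_le_mul₀ hL0]
        have : 2 / l * (1 + 4 * w / l) * (l / 2 - w) = 1 + 2 * w * (l - 4 * w) / l ^ 2 := by
          field_simp
          ring
        rw [this, le_add_iff_nonneg_right]
        have := sub_nonneg.mpr hwl
        positivity

lemma add_div_pow_succ_le (g : ℕ) {l L w Λ : ℝ} (hl : 0 < l) (hw : 0 ≤ w) (hΛ : 0 ≤ Λ)
    (hwl : 4 * w ≤ l) (hL : l / 2 - w ≤ L) :
    (L + Λ) / L ^ (g + 1) ≤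
      2 ^ g / l ^ g * (1 + (2 ^ g * (4 * w) + 4 * (1 + 2 ^ g) * Λ) / l) := by
  set t := 4 * w / l
  have ht0 : 0 ≤ t := by positivity
  have ht1 : t ≤ 1 := div_le_one_of_le₀ hwl hl.le
  have hL0 : 0 < L := by linarith
  have inv_pow_le : L⁻¹ ^ g ≤ (2 / l) ^ g * (1 + 2 ^ g * t) :=
    calc L⁻¹ ^ g ≤ (2 / l * (1 + t)) ^ g := by
          gcongr
          exact inv_le_two_div_mul_one_add hl hw hwl hL
      _ ≤ (2 / l) ^ g * (1 + 2 ^ g * t) := by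
          rw [mul_pow]
          gcongr
          linarith [one_add_pow_le_one_add_mul g ht0 ht1]
  have div_le : Λ / L ≤ 4 * Λ / l := by
    rw [div_le_div_iff₀ hL0 hl]
    nlinarith
  calc (L + Λ) / L ^ (g + 1) = L⁻¹ ^ g * (1 + Λ / L) := by
        rw [pow_succ, inv_pow]
        field_simp
    _ ≤ (2 / l) ^ g * (1 + 2 ^ g * t) * (1 + 4 * Λ / l) := by gcongr
    _ = 2 ^ g / l ^ g * (1 + 2 ^ g * t + (1 + 2 ^ g * t) * (4 * Λ / l)) := by
        rw [div_pow]
        ring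
    _ ≤ 2 ^ g / l ^ g * (1 + 2 ^ g * t + (1 + 2 ^ g * 1) * (4 * Λ / l)) := by gcongr
    _ = 2 ^ g / l ^ g * (1 + (2 ^ g * (4 * w) + 4 * (1 + 2 ^ g) * Λ) / l) := by ring

lemma eventually_log_pow_le (n : ℕ) : ∀ᶠ y : ℝ in atTop, log y ^ n ≤ y := by
  filter_upwards [(isLittleO_pow_log_id_atTop (n := n)).bound one_pos, eventually_ge_atTop 0]
    with y hy hy0
  rw [one_mul, id, norm_of_nonneg hy0] at hy
  exact (le_abs_self _).trans hy

lemma eventually_mul_log_log_three_mul_le (K : ℝ) :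
    ∀ᶠ y : ℝ in atTop, K * log (log (3 * y)) ≤ log y := by
  have three_mul : Tendsto (fun y : ℝ ↦ 3 * y) atTop atTop :=
    tendsto_id.const_mul_atTop three_pos
  have bound := (isLittleO_log_id_atTop.const_mul_left (2 * K)).bound one_pos
  filter_upwards [(tendsto_log_atTop.comp three_mul).eventually bound, eventually_ge_atTop 3]
    with y hy hy3
  have log_three_le : log 3 ≤ log y := log_le_log three_pos hy3
  have log_three_mul : log (3 * y) = log 3 + log y :=
    log_mul three_ne_zero (by linarith)
  have one_lt_log := one_lt_log_three
  rw [Function.comp_apply, one_mul, id,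
    norm_of_nonneg (show 0 ≤ log (3 * y) by linarith)] at hy
  linarith [(le_abs_self _).trans hy]

lemma exists_nat_sq_le_div_log_pow {y : ℝ} (n : ℕ) (hy : 1 ≤ log y) (hn : log y ^ n ≤ y) :
    ∃ D : ℕ, 1 ≤ D ∧ (D : ℝ) ^ 2 ≤ y / log y ^ n ∧
      log y / 2 - n / 2 * log (log y) - log 2 ≤ log D := by
  have hl : 0 < log y := by linarith
  have hy0 : 0 < y := (pow_pos hl n).trans_le hn
  have one_le : 1 ≤ √(y / log y ^ n) := one_le_sqrt.mpr ((one_le_div (by positivity)).mpr hn)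
  refine ⟨⌊√(y / log y ^ n)⌋₊, (Nat.one_le_floor_iff _).mpr one_le, ?_, ?_⟩
  · calc (⌊√(y / log y ^ n)⌋₊ : ℝ) ^ 2 ≤ √(y / log y ^ n) ^ 2 := by
          gcongr
          exact Nat.floor_le (sqrt_nonneg _)
      _ = y / log y ^ n := sq_sqrt (by positivity)
  · have log_sqrt_eq : log √(y / log y ^ n) = log y / 2 - n / 2 * log (log y) := by
      rw [log_sqrt (by positivity), log_div (by positivity) (by positivity), log_pow]
      ring
    linarith [log_sub_log_two_le_log_floor one_le]

lemma sq_mul_one_add_log_pow_add_le (g : ℕ) {y : ℝ} {D : ℕ} (hy : 1 ≤ log y) (hD : 1 ≤ D)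
    (hDy : (D : ℝ) ^ 2 ≤ y / log y ^ (3 * g + 1)) :
    (D * (1 + log D) ^ g) ^ 2 + g * (2 * D + 1) ≤
      (2 ^ (2 * g) + 3 * g) * (y / log y ^ (g + 1)) := by
  have : 0 < log y := by linarith
  have one_le_D : (1 : ℝ) ≤ D := mod_cast hD
  have hy0 : 0 < y := by
    by_contra! hy0
    have : y / log y ^ (3 * g + 1) ≤ 0 := div_nonpos_of_nonpos_of_nonneg hy0 (by positivity)
    nlinarith
  have D_le : (D : ℝ) ≤ y :=
    calc (D : ℝ) ≤ D ^ 2 := by nlinarith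
      _ ≤ y / log y ^ (3 * g + 1) := hDy
      _ ≤ y := div_le_self hy0.le (one_le_pow₀ hy)
  have := log_natCast_nonneg D
  have log_D_le : log D ≤ log y := log_le_log (by linarith) D_le
  have sq_le : (D : ℝ) ^ 2 ≤ y / log y ^ (g + 1) :=
    hDy.trans (div_le_div_of_nonneg_left hy0.le (by positivity)
      (pow_le_pow_right₀ hy (by lia)))
  have main_le : (D * (1 + log D) ^ g) ^ 2 ≤ 2 ^ (2 * g) * (y / log y ^ (g + 1)) :=
    calc (D * (1 + log D) ^ g) ^ 2 = (D : ℝ) ^ 2 * (1 + log D) ^ (2 * g) := by ring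
      _ ≤ y / log y ^ (3 * g + 1) * (2 * log y) ^ (2 * g) := by
          gcongr
          linarith
      _ = 2 ^ (2 * g) * (y / log y ^ (g + 1)) := by
          rw [show 3 * g + 1 = 2 * g + (g + 1) by ring, pow_add, mul_pow]
          field_simp
  have linear_le : (g : ℝ) * (2 * D + 1) ≤ 3 * g * (y / log y ^ (g + 1)) :=
    calc (g : ℝ) * (2 * D + 1) ≤ g * (3 * D ^ 2) := by
          gcongr
          nlinarith
      _ ≤ g * (3 * (y / log y ^ (g + 1))) := by gcongr
      _ = 3 * g * (y / log y ^ (g + 1)) := by ring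
  linarith

end Asymptotics

namespace SieveDensity

variable {g : ℕ} (S : SieveDensity g) {y : ℝ}

/-- The main term `2 ^ g g! 𝔖 y / (log y) ^ g` of the sieve bound, `𝔖` being the singular
series. -/
noncomputable def mainTerm (y : ℝ) : ℝ :=
  2 ^ g * g.factorial * S.singularSeries * (y / log y ^ g)

/-- The relative error, up to a constant depending only on `g`, of the sieve bound. -/
noncomputable def relError (y : ℝ) : ℝ := (log (log (3 * y)) + log (log (3 * S.E))) / log y

lemma log_log_three_mul_E_pos : 0 < log (log (3 * S.E)) :=
  log_log_three_mul_pos (mod_cast S.one_le_E)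

lemma mainTerm_pos (hy : 1 < y) : 0 < S.mainTerm y := by
  have := S.singularSeries_pos
  have := log_pos hy
  rw [mainTerm]
  positivity

lemma relError_pos (hy : 1 < y) : 0 < S.relError y :=
  div_pos (add_pos (log_log_three_mul_pos hy.le) S.log_log_three_mul_E_pos) (log_pos hy)

/-- Everything of size `y / (log y) ^ (g + 1)` can be absorbed in the relative error, since `𝔖` is
bounded below in terms of `g` only. -/
lemma exists_div_log_pow_succ_le (g : ℕ) :
    ∃ C : ℝ, 0 < C ∧ ∀ (S : SieveDensity g) {y : ℝ}, 1 < y →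
      y / log y ^ (g + 1) ≤ C * (S.mainTerm y * S.relError y) := by
  have hm : 0 < log (log 3) := log_pos one_lt_log_three
  set c := exp (-((g + 1) * g ^ 2 * (π ^ 2 / 6)))
  have hc : 0 < c := exp_pos _
  refine ⟨(c * log (log 3))⁻¹, by positivity, fun S y hy ↦ ?_⟩
  have hl := log_pos hy
  have hv := S.log_log_three_mul_E_pos
  have c_le : c ≤ 2 ^ g * g.factorial * S.singularSeries :=
    S.singularSeries_ge.trans (le_mul_of_one_le_left S.singularSeries_pos.le
      (one_le_mul_of_one_le_of_one_le (one_le_pow₀ one_le_two) (mod_cast g.factorial_pos)))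
  have m_le : log (log 3) ≤ log (log (3 * y)) + log (log (3 * S.E)) := by
    linarith [log_log_three_le_log_log_three_mul hy.le]
  rw [le_inv_mul_iff₀ (by positivity)]
  calc c * log (log 3) * (y / log y ^ (g + 1))
      ≤ 2 ^ g * g.factorial * S.singularSeries *
          (log (log (3 * y)) + log (log (3 * S.E))) * (y / log y ^ (g + 1)) := by
        gcongr
        exact hc.le.trans c_le
    _ = S.mainTerm y * S.relError y := by
        rw [mainTerm, relError, pow_succ]
        field_simp

lemma exists_inv_generalizedConv_density_le (g : ℕ) :
    ∃ C : ℝ, 0 < C ∧ ∀ (S : SieveDensity g) {x : ℝ}, 1 < x →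
      (generalizedConv S.density 1 x)⁻¹ ≤ g.factorial * S.singularSeries *
        ((log x + C * log (log (3 * S.E))) / log x ^ (g + 1)) := by
  obtain ⟨C, hC, log_pow_le⟩ := exists_log_pow_div_factorial_le g
  have hm : 0 < log (log 3) := log_pos one_lt_log_three
  refine ⟨C * ((log (log 3))⁻¹ + 1), by positivity, fun S x hx ↦ ?_⟩
  have := log_pos hx
  have := S.singularSeries_pos
  have conv_pos := zero_lt_one.trans_le (S.one_le_generalizedConv_density hx.le)
  have error_le : C * (1 + log (log (3 * S.E))) ≤
      C * ((log (log 3))⁻¹ + 1) * log (log (3 * S.E)) := by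
    rw [mul_assoc, add_one_mul]
    gcongr
    rw [← div_eq_inv_mul, one_le_div hm]
    exact log_log_three_le_log_log_three_mul (mod_cast S.one_le_E)
  calc (generalizedConv S.density 1 x)⁻¹
      ≤ g.factorial * S.singularSeries *
          ((log x + C * (1 + log (log (3 * S.E)))) / log x ^ (g + 1)) := by
        rw [inv_le_iff_one_le_mul₀ conv_pos, mul_div_assoc', div_mul_eq_mul_div,
          one_le_div (by positivity)]
        linarith [(div_le_iff₀ (by positivity)).mp (log_pow_le S hx.le)]
    _ ≤ g.factorial * S.singularSeries *
          ((log x + C * ((log (log 3))⁻¹ + 1) * log (log (3 * S.E))) / log x ^ (g + 1)) := by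
        gcongr

lemma exists_div_generalizedConv_density_le (g : ℕ) {K : ℝ} (hK : 0 ≤ K) :
    ∃ C : ℝ, 0 < C ∧ ∀ (S : SieveDensity g) {x y : ℝ}, 1 ≤ x → 1 < y →
      4 * (K * log (log (3 * y))) ≤ log y → log y / 2 - K * log (log (3 * y)) ≤ log x →
      y / generalizedConv S.density 1 x ≤ S.mainTerm y * (1 + C * S.relError y) := by
  obtain ⟨C, hC, inv_le⟩ := exists_inv_generalizedConv_density_le g
  refine ⟨2 ^ g * (4 * K) + 4 * (1 + 2 ^ g) * C, by positivity, fun S x y hx hy hKy hxy ↦ ?_⟩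
  have hl := log_pos hy
  have hu := log_log_three_mul_pos hy.le
  have hv := S.log_log_three_mul_E_pos
  set u := log (log (3 * y))
  set v := log (log (3 * S.E))
  have one_lt_x : 1 < x := (log_pos_iff (by linarith)).mp (by linarith)
  have := S.singularSeries_pos
  have : 0 < y := by linarith
  calc y / generalizedConv S.density 1 x
      ≤ y * (g.factorial * S.singularSeries * ((log x + C * v) / log x ^ (g + 1))) := by
        rw [div_eq_mul_inv]
        gcongr
        exact inv_le S one_lt_x
    _ ≤ y * (g.factorial * S.singularSeries * (2 ^ g / log y ^ g *
          (1 + (2 ^ g * (4 * (K * u)) + 4 * (1 + 2 ^ g) * (C * v)) / log y))) := by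
        gcongr
        exact add_div_pow_succ_le g hl (by positivity) (by positivity) hKy hxy
    _ ≤ y * (g.factorial * S.singularSeries * (2 ^ g / log y ^ g *
          (1 + (2 ^ g * (4 * K) + 4 * (1 + 2 ^ g) * C) * (u + v) / log y))) := by
        gcongr
        linarith [show 0 ≤ 2 ^ g * (4 * K) * v + 4 * (1 + 2 ^ g) * C * u by positivity]
    _ = S.mainTerm y * (1 + (2 ^ g * (4 * K) + 4 * (1 + 2 ^ g) * C) * S.relError y) := by
        rw [mainTerm, relError]
        ring

/-- The sifting range is `D ≈ (y / (log y) ^ (3 g + 1)) ^ (1 / 2)`, just short enough for the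
remainder `(D (1 + log D) ^ g) ^ 2` to be `O(y / (log y) ^ (g + 1))`. -/
lemma exists_forall_ge_le_mainTerm_mul (g : ℕ) :
    ∃ y₀ C : ℝ, 1 < y₀ ∧ 0 < C ∧ ∀ (S : SieveDensity g) {y N : ℝ}, y₀ ≤ y →
      (∀ D : ℕ, 1 ≤ D → N ≤ y / generalizedConv S.density 1 D +
        (D * (1 + log D) ^ g) ^ 2 + g * (2 * D + 1)) →
      N ≤ S.mainTerm y * (1 + C * S.relError y) := by
  have hm : 0 < log (log 3) := log_pos one_lt_log_three
  set K : ℝ := (3 * g + 1 : ℕ) / 2 + log 2 / log (log 3)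
  have hK : 0 ≤ K := by positivity
  obtain ⟨C₁, hC₁, main_le⟩ := exists_div_generalizedConv_density_le g hK
  obtain ⟨C₂, hC₂, absorb⟩ := exists_div_log_pow_succ_le g
  obtain ⟨y₀, hy₀⟩ := Filter.eventually_atTop.mp
    ((eventually_log_pow_le (3 * g + 1)).and ((eventually_mul_log_log_three_mul_le (4 * K)).and
      (tendsto_log_atTop.eventually_ge_atTop 1)))
  refine ⟨max y₀ 2, C₁ + (2 ^ (2 * g) + 3 * g) * C₂, lt_max_of_lt_right one_lt_two,
    by positivity, fun S y N hy hN ↦ ?_⟩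
  obtain ⟨log_pow_le, log_log_le, one_le_log⟩ := hy₀ y ((le_max_left _ _).trans hy)
  have hy1 : 1 < y := one_lt_two.trans_le ((le_max_right _ _).trans hy)
  obtain ⟨D, hD, sq_le, le_log_D⟩ := exists_nat_sq_le_div_log_pow (3 * g + 1) one_le_log log_pow_le
  have le_log_D' : log y / 2 - K * log (log (3 * y)) ≤ log D := by
    refine le_trans ?_ le_log_D
    have log_two_le : log 2 ≤ log 2 / log (log 3) * log (log (3 * y)) := by
      rw [div_mul_eq_mul_div, le_div_iff₀ hm]
      exact mul_le_mul_of_nonneg_left (log_log_three_le_log_log_three_mul hy1.le)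
        (log_nonneg one_le_two)
    have log_log_mono : ((3 * g + 1 : ℕ) : ℝ) / 2 * log (log y) ≤
        ((3 * g + 1 : ℕ) : ℝ) / 2 * log (log (3 * y)) := by
      gcongr
      linarith
    rw [add_mul]
    linarith
  calc N ≤ y / generalizedConv S.density 1 D +
        ((D * (1 + log D) ^ g) ^ 2 + g * (2 * D + 1)) := by linarith [hN D hD]
    _ ≤ S.mainTerm y * (1 + C₁ * S.relError y) +
        (2 ^ (2 * g) + 3 * g) * (C₂ * (S.mainTerm y * S.relError y)) := by
        refine add_le_add (main_le S (mod_cast hD) hy1 (by linarith) le_log_D') ?_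
        refine (sq_mul_one_add_log_pow_add_le g one_le_log hD sq_le).trans ?_
        gcongr
        exact absorb S hy1
    _ = S.mainTerm y * (1 + (C₁ + (2 ^ (2 * g) + 3 * g) * C₂) * S.relError y) := by ring

lemma exists_forall_le_le_mainTerm_mul (g : ℕ) (y₀ : ℝ) :
    ∃ C : ℝ, 0 < C ∧ ∀ (S : SieveDensity g) {y N : ℝ}, 1 < y → y ≤ y₀ → N ≤ y + 1 →
      N ≤ S.mainTerm y * (1 + C * S.relError y) := by
  obtain ⟨C, hC, absorb⟩ := exists_div_log_pow_succ_le g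
  refine ⟨2 * max 1 (log y₀) ^ (g + 1) * C, by positivity, fun S y N hy hyy₀ hN ↦ ?_⟩
  have hl := log_pos hy
  have log_le : log y ≤ max 1 (log y₀) := le_max_of_le_right (log_le_log (by linarith) hyy₀)
  calc N ≤ 2 * log y ^ (g + 1) * (y / log y ^ (g + 1)) := by
        field_simp
        linarith
    _ ≤ 2 * max 1 (log y₀) ^ (g + 1) * (C * (S.mainTerm y * S.relError y)) := by
        gcongr
        exact absorb S hy
    _ ≤ S.mainTerm y * (1 + 2 * max 1 (log y₀) ^ (g + 1) * C * S.relError y) := by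
        linarith [S.mainTerm_pos hy]

theorem exists_le_mainTerm_mul (g : ℕ) :
    ∃ C : ℝ, 0 < C ∧ ∀ (S : SieveDensity g) {y N : ℝ}, 1 < y → N ≤ y + 1 →
      (∀ D : ℕ, 1 ≤ D → N ≤ y / generalizedConv S.density 1 D +
        (D * (1 + log D) ^ g) ^ 2 + g * (2 * D + 1)) →
      N ≤ S.mainTerm y * (1 + C * S.relError y) := by
  obtain ⟨y₀, C₁, -, hC₁, large⟩ := exists_forall_ge_le_mainTerm_mul g
  obtain ⟨C₂, -, small⟩ := exists_forall_le_le_mainTerm_mul g y₀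
  refine ⟨max C₁ C₂, lt_max_of_lt_left hC₁, fun S y N hy hN hD ↦ ?_⟩
  have := S.mainTerm_pos hy
  have := S.relError_pos hy
  rcases le_total y₀ y with hyy₀ | hyy₀
  · calc N ≤ S.mainTerm y * (1 + C₁ * S.relError y) := large S hyy₀ hD
      _ ≤ S.mainTerm y * (1 + max C₁ C₂ * S.relError y) := by gcongr; exact le_max_left _ _
  · calc N ≤ S.mainTerm y * (1 + C₂ * S.relError y) := small S hy hyy₀ hN
      _ ≤ S.mainTerm y * (1 + max C₁ C₂ * S.relError y) := by gcongr; exact le_max_right _ _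

end SieveDensity

theorem sieve_upper_bound_general (g : ℕ) :
    ∃ C : ℝ, 0 < C ∧ ∀ a b : Fin g → ℤ,
      sieveE a b ≠ 0 →
      (∀ p : ℕ, p.Prime → sieveRho a b p < p) →
      ∀ y z : ℝ, 1 < y →
        (Nat.card {n : ℤ | z - y < (n : ℝ) ∧ (n : ℝ) ≤ z ∧
            ∀ i, Prime (a i * n + b i)} : ℝ) ≤
          2 ^ g * (Nat.factorial g : ℝ) *
          (∏' p : Nat.Primes,
            ((1 - ((sieveRho a b p : ℝ) - 1) / ((p : ℕ) - 1)) *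
              (1 - 1 / ((p : ℕ) : ℝ)) ^ (-(g : ℤ) + 1))) *
          (y / (Real.log y) ^ g) *
          (1 + C * (Real.log (Real.log (3 * y)) +
              Real.log (Real.log (3 * |(sieveE a b : ℝ)|))) / Real.log y) := by
  obtain ⟨C, hC, le_mainTerm_mul⟩ := SieveDensity.exists_le_mainTerm_mul g
  refine ⟨C, hC, fun a b hE hρ y z hy ↦ ?_⟩
  have hyz : z - y ≤ z := by linarith
  have hzy : z - (z - y) = y := sub_sub_cancel z y
  have natAbs_cast : ((sieveE a b).natAbs : ℝ) = |(sieveE a b : ℝ)| := by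
    rw [Nat.cast_natAbs, Int.cast_abs]
  rw [← singularSeries_linearSieveDensity hE hρ, ← natAbs_cast, mul_div_assoc]
  refine le_mainTerm_mul (linearSieveDensity hE hρ) hy ?_ fun D hD ↦ ?_
  · simpa only [hzy] using natCard_setOf_forall_prime_le_add_one (a := a) (b := b) hyz
  · simpa only [hzy] using natCard_setOf_forall_prime_le hE hρ hyz hD

/-- The upper-bound sieve estimate of Halberstam–Richert (Theorem 5.7 of "Sieve Methods"). -/
theorem sieve_upper_bound (g : ℕ) :
    ∃ C : ℝ, 0 < C ∧ ∀ a b : Fin g → ℤ,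
      sieveE a b ≠ 0 →
      (∀ p : ℕ, p.Prime → sieveRho a b p < p) →
      ∀ y z : ℝ, 1 < y → y ≤ z →
        (Nat.card {n : ℤ | z - y < (n : ℝ) ∧ (n : ℝ) ≤ z ∧
            ∀ i, Prime (a i * n + b i)} : ℝ) ≤
          2 ^ g * (Nat.factorial g : ℝ) *
          (∏' p : Nat.Primes,
            ((1 - ((sieveRho a b p : ℝ) - 1) / ((p : ℕ) - 1)) *
              (1 - 1 / ((p : ℕ) : ℝ)) ^ (-(g : ℤ) + 1))) *
          (y / (Real.log y) ^ g) *
          (1 + C * (Real.log (Real.log (3 * y)) +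
              Real.log (Real.log (3 * |(sieveE a b : ℝ)|))) / Real.log y) :=
  let ⟨C, hC, bound⟩ := sieve_upper_bound_general g
  ⟨C, hC, fun a b hE hρ y z hy _ ↦ bound a b hE hρ y z hy⟩
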